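/- arXiv:2009.00699 — 7 statements merged into one kernel-verified Lean document; each statement's English description precedes it below -/
import Mathlib

section
/- Let n and k be positive integers with i·n = 7k for some i ∈ {1,2,3} and 2k < n, and suppose that either n ≥ 42 or (n,k) ∈ {(28,8),(35,10),(35,15)}. Then the cop number of the generalised Petersen graph GP(n,k) equals 4. -/
open SimpleGraph

/-- Vertices of the generalised Petersen graph: `Sum.inl j` is the outer vertex `a_j`,
`Sum.inr j` is the inner vertex `b_j`. -/
abbrev GPVertex (n : ℕ) := ZMod n ⊕ ZMod n

/-- The defining relation of the edges of `GP(n,k)`. -/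
def GPRel (n k : ℕ) : GPVertex n → GPVertex n → Prop
  | Sum.inl i, Sum.inl j => j = i + 1
  | Sum.inl i, Sum.inr j => j = i
  | Sum.inr i, Sum.inr j => j = i + (k : ZMod n)
  | _, _ => False

/-- The generalised Petersen graph `GP(n,k)`. -/
def GP (n k : ℕ) : SimpleGraph (GPVertex n) := SimpleGraph.fromRel (GPRel n k)

/-- The closed neighbourhood of a vertex. -/
def closedNbhd {V : Type*} (G : SimpleGraph V) (v : V) : Set V :=
  insert v {w | G.Adj v w}

/-- A configuration of three cops and a robber is trapped. -/
def Trapped {V : Type*} (G : SimpleGraph V) (c₁ c₂ c₃ r : V) : Prop :=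
  (G.Adj c₁ r ∨ G.Adj c₂ r ∨ G.Adj c₃ r) ∨
    ∀ v, G.Adj r v →
      (c₁ ∈ closedNbhd G v ∨ c₂ ∈ closedNbhd G v ∨ c₃ ∈ closedNbhd G v)

/-- The branch of `v` through `u`, relative to the robber position `r`. -/
def branch {V : Type*} (G : SimpleGraph V) (r v u : V) : Set V :=
  insert v {w | G.dist r w ≤ 4 ∧
    ∃ p : G.Walk r w, p.length = G.dist r w ∧ [r, v, u] <+: p.support}

/-- The sequence of cop positions determined by an initial placement, a cop strategy,
and a sequence of robber positions. -/
def copSeq {V : Type*} {m : ℕ} (init : Fin m → V)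
    (move : (Fin m → V) → V → Fin m → V) (r : ℕ → V) : ℕ → Fin m → V
  | 0 => init
  | t + 1 => move (copSeq init move r t) (r t)

/-- The cop player has a winning strategy with `m` cops on `G`. -/
def CopsWinWith {V : Type*} (G : SimpleGraph V) (m : ℕ) : Prop :=
  ∃ (init : Fin m → V) (move : (Fin m → V) → V → Fin m → V),
    (∀ c r i, move c r i = c i ∨ G.Adj (c i) (move c r i)) ∧
    ∀ r : ℕ → V, (∀ t, r (t + 1) = r t ∨ G.Adj (r t) (r (t + 1))) →
      ∃ t i, copSeq init move r t i = r t ∨ copSeq init move r (t + 1) i = r t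

/-- The cop number of a graph. -/
noncomputable def copNumber {V : Type*} (G : SimpleGraph V) : ℕ :=
  sInf {m | CopsWinWith G m}


namespace CopProof

/-- Closed adjacency in a graph. -/
def Near {V : Type*} (G : SimpleGraph V) (u v : V) : Prop := v = u ∨ G.Adj u v

/-- The cops, to move, can win within `N` rounds. -/
def WinIn {V : Type*} {m : ℕ} (G : SimpleGraph V) : ℕ → (Fin m → V) → V → Prop
  | 0, _, _ => False
  | N + 1, c, r => ∃ c' : Fin m → V, (∀ i, Near G (c i) (c' i)) ∧
      ((∃ i, c' i = r) ∨ ∀ r', Near G r r' → WinIn G N c' r')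

theorem WinIn.succ {V : Type*} {m : ℕ} {G : SimpleGraph V} :
    ∀ {N : ℕ} {c : Fin m → V} {r : V}, WinIn G N c r → WinIn G (N + 1) c r
  | 0, _, _, h => h.elim
  | N + 1, c, r, h => by
    obtain ⟨c', hc, h⟩ := h
    refine ⟨c', hc, h.imp id fun h r' hr => (h r' hr).succ⟩

theorem WinIn.mono {V : Type*} {m : ℕ} {G : SimpleGraph V} {N M : ℕ} (hNM : N ≤ M)
    {c : Fin m → V} {r : V} (h : WinIn G N c r) : WinIn G M c r := by
  induction hNM with
  | refl => exact h
  | step _ ih => exact ih.succ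

theorem WinIn.perm {V : Type*} {m : ℕ} {G : SimpleGraph V} (e : Equiv.Perm (Fin m)) :
    ∀ {N : ℕ} {c : Fin m → V} {r : V}, WinIn G N c r → WinIn G N (c ∘ e) r
  | 0, _, _, h => h.elim
  | N + 1, c, r, h => by
    obtain ⟨c', hc, h⟩ := h
    refine ⟨c' ∘ e, fun i => hc (e i), ?_⟩
    rcases h with ⟨i, hi⟩ | h
    · exact Or.inl ⟨e.symm i, by simpa using hi⟩
    · exact Or.inr fun r' hr => (h r' hr).perm e

open Classical in
theorem copsWin_of_winIn {V : Type*} {m : ℕ} (G : SimpleGraph V) (init : Fin m → V)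
    (h : ∀ r, ∃ N, WinIn G N init r) : CopsWinWith G m := by
  have key : ∀ (c : Fin m → V) (r : V), ∃ c' : Fin m → V, (∀ i, Near G (c i) (c' i)) ∧
      ∀ N, WinIn G N c r → (∃ i, c' i = r) ∨
        ∃ M < N, ∀ r', Near G r r' → WinIn G M c' r' := by
    intro c r
    by_cases hex : ∃ N, WinIn G N c r
    · have hf := Nat.find_spec hex
      have hmin : ∀ N, WinIn G N c r → Nat.find hex ≤ N := fun N hN => Nat.find_min' hex hN
      rcases hfe : Nat.find hex with _ | M
      · rw [hfe] at hf
        exact hf.elim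
      · rw [hfe] at hf
        obtain ⟨c', hc, h'⟩ := hf
        refine ⟨c', hc, fun N hN => h'.imp id fun h' => ⟨M, ?_, h'⟩⟩
        have := hmin N hN
        omega
    · exact ⟨c, fun i => Or.inl rfl, fun N hN => (hex ⟨N, hN⟩).elim⟩
  choose move hmove hwin using key
  refine ⟨init, move, hmove, fun r hr => ?_⟩
  have main : ∀ N t, WinIn G N (copSeq init move r t) (r t) →
      ∃ t i, copSeq init move r t i = r t ∨ copSeq init move r (t + 1) i = r t := by
    intro N
    induction N using Nat.strong_induction_on with
    | _ N ih =>
      intro t ht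
      rcases hwin _ _ N ht with ⟨i, hi⟩ | ⟨M, hM, h'⟩
      · exact ⟨t, i, Or.inr hi⟩
      · exact ih M hM (t + 1) (h' _ (hr t))
  obtain ⟨N, hN⟩ := h (r 0)
  exact main N 0 hN

/-- Four cops at `a b c d`, to move, win against the robber at `r`. -/
def W {V : Type*} (G : SimpleGraph V) (a b c d r : V) : Prop := ∃ N, WinIn G N ![a, b, c, d] r

theorem W.cap {V : Type*} {G : SimpleGraph V} {a b c d r : V}
    (h : Near G a r ∨ Near G b r ∨ Near G c r ∨ Near G d r) : W G a b c d r := by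
  have nr : ∀ x, Near G x x := fun x => Or.inl rfl
  rcases h with h | h | h | h
  · exact ⟨1, ![r, b, c, d], by intro i; fin_cases i <;> simp [nr, h], Or.inl ⟨0, rfl⟩⟩
  · exact ⟨1, ![a, r, c, d], by intro i; fin_cases i <;> simp [nr, h], Or.inl ⟨1, rfl⟩⟩
  · exact ⟨1, ![a, b, r, d], by intro i; fin_cases i <;> simp [nr, h], Or.inl ⟨2, rfl⟩⟩
  · exact ⟨1, ![a, b, c, r], by intro i; fin_cases i <;> simp [nr, h], Or.inl ⟨3, rfl⟩⟩

theorem W.step {V : Type*} [Finite V] {G : SimpleGraph V} {a b c d r a' b' c' d' : V}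
    (ha : Near G a a') (hb : Near G b b') (hc : Near G c c') (hd : Near G d d')
    (h : ∀ r', Near G r r' → W G a' b' c' d' r') : W G a b c d r := by
  cases nonempty_fintype V
  have h2 : ∀ r', ∃ N, Near G r r' → WinIn G N ![a', b', c', d'] r' := by
    intro r'
    by_cases hr : Near G r r'
    · obtain ⟨N, hN⟩ := h r' hr
      exact ⟨N, fun _ => hN⟩
    · exact ⟨0, fun h => (hr h).elim⟩
  choose f hf using h2
  refine ⟨Finset.univ.sup f + 1, ![a', b', c', d'], ?_, Or.inr fun r' hr => ?_⟩
  · intro i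
    fin_cases i <;> simp [ha, hb, hc, hd]
  · exact (hf r' hr).mono (Finset.le_sup (Finset.mem_univ r'))

theorem W.swap12 {V : Type*} {G : SimpleGraph V} {a b c d r : V} (h : W G a b c d r) :
    W G a c b d r := by
  obtain ⟨N, hN⟩ := h
  refine ⟨N, ?_⟩
  convert hN.perm (Equiv.swap 1 2) using 1
  ext i
  fin_cases i <;> rfl

theorem W.swap01 {V : Type*} {G : SimpleGraph V} {a b c d r : V} (h : W G a b c d r) :
    W G b a c d r := by
  obtain ⟨N, hN⟩ := h
  refine ⟨N, ?_⟩
  convert hN.perm (Equiv.swap 0 1) using 1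
  ext i
  fin_cases i <;> rfl

theorem near_inl {n k : ℕ} {x : ZMod n} {v : GPVertex n} :
    Near (GP n k) (Sum.inl x) v ↔
      v = Sum.inl x ∨ v = Sum.inl (x + 1) ∨ v = Sum.inl (x - 1) ∨ v = Sum.inr x := by
  rcases v with y | y
  · simp only [Near, GP, SimpleGraph.fromRel_adj, GPRel, Sum.inl.injEq, ne_eq, reduceCtorEq,
      or_false, eq_sub_iff_add_eq]
    constructor
    · rintro (h | ⟨-, h | h⟩) <;> simp [h]
    · rintro (h | h | h)
      · exact Or.inl h
      · by_cases hxy : y = x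
        · exact Or.inl hxy
        · exact Or.inr ⟨fun h => hxy h.symm, Or.inl h⟩
      · by_cases hxy : y = x
        · exact Or.inl hxy
        · exact Or.inr ⟨fun h => hxy h.symm, Or.inr h.symm⟩
  · simp [Near, GP, SimpleGraph.fromRel_adj, GPRel]

theorem near_inr {n k : ℕ} {x : ZMod n} {v : GPVertex n} :
    Near (GP n k) (Sum.inr x) v ↔
      v = Sum.inr x ∨ v = Sum.inr (x + k) ∨ v = Sum.inr (x - k) ∨ v = Sum.inl x := by
  rcases v with y | y
  · simp [Near, GP, SimpleGraph.fromRel_adj, GPRel, eq_comm]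
  · simp only [Near, GP, SimpleGraph.fromRel_adj, GPRel, Sum.inr.injEq, ne_eq, reduceCtorEq,
      or_false, eq_sub_iff_add_eq]
    constructor
    · rintro (h | ⟨-, h | h⟩) <;> simp [h]
    · rintro (h | h | h)
      · exact Or.inl h
      · by_cases hxy : y = x
        · exact Or.inl hxy
        · exact Or.inr ⟨fun h => hxy h.symm, Or.inl h⟩
      · by_cases hxy : y = x
        · exact Or.inl hxy
        · exact Or.inr ⟨fun h => hxy h.symm, Or.inr h.symm⟩

/-- Position of a vertex. -/
def pos {n : ℕ} : GPVertex n → ZMod n := Sum.elim id id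

/-- Shift of a vertex along its level. -/
def shift {n : ℕ} (z : ZMod n) : GPVertex n → GPVertex n := Sum.map (· + z) (· + z)

/-- `u` and `v` have the same level, `u = v + z`. -/
theorem near_shift {n k : ℕ} {r r' : GPVertex n} (z : ZMod n) (h : Near (GP n k) r r') :
    Near (GP n k) (shift z r) (shift z r') := by
  rcases r with x | x
  · rw [near_inl] at h
    simp only [shift, Sum.map_inl, near_inl]
    rcases h with rfl | rfl | rfl | rfl
    · simp
    · simp [add_right_comm]
    · simp [add_sub_right_comm]
    · simp
  · rw [near_inr] at h
    simp only [shift, Sum.map_inr, near_inr]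
    rcases h with rfl | rfl | rfl | rfl
    · simp
    · simp [add_right_comm]
    · simp [add_sub_right_comm]
    · simp

theorem near_refl {V : Type*} (G : SimpleGraph V) (v : V) : Near G v v := Or.inl rfl

theorem shift_zero {n : ℕ} (r : GPVertex n) : shift 0 r = r := by
  rcases r with x | x <;> simp [shift]

/-- Cop `c` can move into synchrony (same level, residue modulo `k`) with `r`. -/
def K {n : ℕ} (k : ℕ) (c r : GPVertex n) : Prop := ∃ j : ℤ, Near (GP n k) c (shift (j * k) r)

theorem K_of_sync {n k : ℕ} {r r' : GPVertex n} (j : ℤ) (h : Near (GP n k) r r') :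
    K k (shift ((j : ZMod n) * (k : ZMod n)) r) r' := ⟨j, near_shift _ h⟩

/-- An outer vertex with the residue of the robber. -/
theorem K_of_outer {n k : ℕ} {r : GPVertex n} (j : ℤ) :
    K k (Sum.inl (pos r + (j : ZMod n) * (k : ZMod n)) : GPVertex n) r := by
  refine ⟨j, ?_⟩
  rcases r with x | x
  · simp [pos, shift, near_inl]
  · simp [pos, shift, near_inl]

/-- A cop on the outer cycle in the residue class of the robber stays able to synchronise. -/
theorem K_of_outer_step {n k : ℕ} {r r' : GPVertex n} (j : ℤ) (h : Near (GP n k) r r') :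
    K k (Sum.inl (pos r + (j : ZMod n) * (k : ZMod n)) : GPVertex n) r' := by
  rcases r with x | x
  · simpa [shift, pos] using K_of_sync j h
  · rw [near_inr] at h
    rcases h with rfl | rfl | rfl | rfl
    · exact K_of_outer (r := Sum.inr x) j
    · convert K_of_outer (r := Sum.inr (x + (k : ZMod n))) (j - 1) using 2
      simp [pos]; ring
    · convert K_of_outer (r := Sum.inr (x - (k : ZMod n))) (j + 1) using 2
      simp [pos]; ring
    · exact K_of_outer (r := Sum.inl x) j

/-- Two outer cops at distances `g` ahead and `h` behind the robber, modulo multiples of `k`. -/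
def Ch {n : ℕ} (k : ℕ) (b c r : GPVertex n) (g h : ℤ) : Prop :=
  (∃ i : ℤ, b = Sum.inl (pos r + i * k + g)) ∧ ∃ j : ℤ, c = Sum.inl (pos r + j * k - h)

theorem Ch_start {n : ℕ} [NeZero n] (k : ℕ) (y z : ZMod n) (r : GPVertex n) :
    ∃ g h : ℕ, Ch k (Sum.inl y) (Sum.inl z) r g h := by
  refine ⟨(y - pos r).val, (pos r - z).val, ⟨0, ?_⟩, ⟨0, ?_⟩⟩ <;> simp

theorem Ch_step {n k : ℕ} {b c r r' : GPVertex n} {g h : ℤ} (hch : Ch k b c r g h)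
    (hr : Near (GP n k) r r') :
    Ch k b c r' g h ∨ Ch k b c r' (g - 1) (h + 1) ∨ Ch k b c r' (g + 1) (h - 1) := by
  obtain ⟨⟨i, rfl⟩, j, rfl⟩ := hch
  rcases r with x | x
  · rw [near_inl] at hr
    rcases hr with rfl | rfl | rfl | rfl
    · exact Or.inl ⟨⟨i, rfl⟩, j, rfl⟩
    · refine Or.inr (Or.inl ⟨⟨i, ?_⟩, j, ?_⟩) <;> simp [pos] <;> ring
    · refine Or.inr (Or.inr ⟨⟨i, ?_⟩, j, ?_⟩) <;> simp [pos] <;> ring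
    · exact Or.inl ⟨⟨i, rfl⟩, j, rfl⟩
  · rw [near_inr] at hr
    rcases hr with rfl | rfl | rfl | rfl
    · exact Or.inl ⟨⟨i, rfl⟩, j, rfl⟩
    · refine Or.inl ⟨⟨i - 1, ?_⟩, j - 1, ?_⟩ <;> simp [pos] <;> ring
    · refine Or.inl ⟨⟨i + 1, ?_⟩, j + 1, ?_⟩ <;> simp [pos] <;> ring
    · exact Or.inl ⟨⟨i, rfl⟩, j, rfl⟩

/-- One cop move of the chase modulo `k`. -/
theorem chase_move {n k : ℕ} {b c r : GPVertex n} {g h : ℕ} (hch : Ch k b c r g h) :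
    ∃ y z : ZMod n, Near (GP n k) b (Sum.inl y) ∧ Near (GP n k) c (Sum.inl z) ∧
      ((∀ r', Near (GP n k) r r' → K k (Sum.inl y) r') ∨
       (∀ r', Near (GP n k) r r' → K k (Sum.inl z) r') ∨
       ∀ r', Near (GP n k) r r' → ∃ g' h' : ℕ, g' + h' < g + h ∧
          Ch k (Sum.inl y) (Sum.inl z) r' g' h') := by
  obtain ⟨⟨i, rfl⟩, j, rfl⟩ := hch
  by_cases hg : g ≤ 1
  · refine ⟨pos r + i * k, _, ?_, near_refl _ _, Or.inl fun r' hr => K_of_outer_step i hr⟩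
    rw [near_inl]
    interval_cases g <;> simp
  by_cases hh : h ≤ 1
  · refine ⟨_, pos r + j * k, near_refl _ _, ?_, Or.inr (Or.inl fun r' hr => K_of_outer_step j hr)⟩
    rw [near_inl]
    interval_cases h <;> simp
  refine ⟨pos r + i * k + g - 1, pos r + j * k - h + 1, ?_, ?_, Or.inr (Or.inr fun r' hr => ?_)⟩
  · simp [near_inl]
  · simp [near_inl]
  have h0 : Ch k (Sum.inl (pos r + (i : ZMod n) * (k : ZMod n) + (g : ZMod n) - 1) : GPVertex n)
      (Sum.inl (pos r + (j : ZMod n) * (k : ZMod n) - (h : ZMod n) + 1)) r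
      ((g : ℤ) - 1) ((h : ℤ) - 1) := by
    refine ⟨⟨i, ?_⟩, j, ?_⟩ <;> simp <;> ring
  rcases Ch_step h0 hr with h1 | h1 | h1
  · refine ⟨g - 1, h - 1, by omega, ?_⟩
    convert h1 using 1 <;> omega
  · refine ⟨g - 2, h, by omega, ?_⟩
    convert h1 using 1 <;> omega
  · refine ⟨g, h - 2, by omega, ?_⟩
    convert h1 using 1 <;> omega

/-- Two synchronised cops, with gaps `g` and `h` measured in steps of `k`. -/
def KP {n : ℕ} (k : ℕ) (a b r : GPVertex n) (g h : ℕ) : Prop :=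
  Near (GP n k) a (shift (g * k) r) ∧ Near (GP n k) b (shift (-(h * k)) r)

theorem KP_start {n k : ℕ} [NeZero n] {a b r : GPVertex n} (ha : K k a r) (hb : K k b r) :
    ∃ g h : ℕ, KP k a b r g h := by
  obtain ⟨i, hi⟩ := ha
  obtain ⟨j, hj⟩ := hb
  have key : ∀ i : ℤ, ((((i : ZMod n)).val : ℕ) : ZMod n) = (i : ZMod n) := fun i => by simp
  refine ⟨(i : ZMod n).val, ((-j : ℤ) : ZMod n).val, ?_, ?_⟩
  · rw [key]; exact hi
  · rw [key]; simpa using hj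

/-- The exact chase (no multiples of `k`), with two outer cops. -/
def Ex {n : ℕ} (c d r : GPVertex n) (g h : ℤ) : Prop :=
  c = Sum.inl (pos r + g) ∧ d = Sum.inl (pos r - h)

theorem Ex_start {n : ℕ} [NeZero n] (y z : ZMod n) (r : GPVertex n) :
    ∃ g h : ℕ, Ex (Sum.inl y) (Sum.inl z) r g h := by
  refine ⟨(y - pos r).val, (pos r - z).val, ?_, ?_⟩ <;> simp

theorem phase2 {n k : ℕ} [NeZero n] : ∀ (s t : ℕ) (g h p q : ℕ) (a b c d r : GPVertex n),
    g + h ≤ s → p + q ≤ t → KP k a b r g h → Ex c d r p q → W (GP n k) a b c d r := by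
  intro s
  induction s using Nat.strong_induction_on with
  | _ s ihs =>
  intro t
  induction t using Nat.strong_induction_on with
  | _ t iht =>
  intro g h p q a b c d r hgh hpq hK hE
  obtain ⟨hKa, hKb⟩ := hK
  rcases Nat.eq_zero_or_pos g with rfl | hg
  · exact W.cap (Or.inl (by simpa [shift_zero] using hKa))
  rcases Nat.eq_zero_or_pos h with rfl | hh
  · exact W.cap (Or.inr (Or.inl (by simpa [shift_zero] using hKb)))
  obtain ⟨rfl, rfl⟩ := hE
  -- the two synchronised cops after a step of the robber by a multiple of `k`
  have kplus : ∀ (x : ZMod n) (y z : ZMod n), r = Sum.inr x →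
      W (GP n k) (shift (g * k) r) (shift (-(h * k)) r) (Sum.inl y) (Sum.inl z)
        (Sum.inr (x + k)) := by
    rintro x y z rfl
    obtain ⟨p', q', hE'⟩ := Ex_start y z (Sum.inr (x + (k : ZMod n)))
    refine ihs (s - 1) (by omega) (p' + q') (g - 1) h p' q' _ _ _ _ _ (by omega) le_rfl ⟨?_, ?_⟩ hE'
    · refine Or.inl ?_
      simp only [shift, Sum.map_inr, Nat.cast_sub (show 1 ≤ g from hg)]
      congr 1; push_cast; ring
    · exact near_shift _ (by simp [near_inr])
  have kminus : ∀ (x : ZMod n) (y z : ZMod n), r = Sum.inr x →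
      W (GP n k) (shift (g * k) r) (shift (-(h * k)) r) (Sum.inl y) (Sum.inl z)
        (Sum.inr (x - k)) := by
    rintro x y z rfl
    obtain ⟨p', q', hE'⟩ := Ex_start y z (Sum.inr (x - (k : ZMod n)))
    refine ihs (s - 1) (by omega) (p' + q') g (h - 1) p' q' _ _ _ _ _ (by omega) le_rfl ⟨?_, ?_⟩ hE'
    · exact near_shift _ (by simp [near_inr])
    · refine Or.inl ?_
      simp only [shift, Sum.map_inr, Nat.cast_sub (show 1 ≤ h from hh)]
      congr 1; push_cast; ring
  by_cases hp : p ≤ 1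
  · rcases r with x | x
    · refine W.cap (Or.inr (Or.inr (Or.inl ?_)))
      interval_cases p <;> simp [near_inl, pos]
    · refine W.step (c' := Sum.inl x) hKa hKb ?_ (near_refl _ _) fun r' hr => ?_
      · interval_cases p <;> simp [near_inl, pos]
      · rw [near_inr] at hr
        rcases hr with rfl | rfl | rfl | rfl
        · exact W.cap (Or.inr (Or.inr (Or.inl (by simp [near_inl]))))
        · exact kplus x _ _ rfl
        · exact kminus x _ _ rfl
        · exact W.cap (Or.inr (Or.inr (Or.inl (by simp [near_inl]))))
  by_cases hq : q ≤ 1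
  · rcases r with x | x
    · refine W.cap (Or.inr (Or.inr (Or.inr ?_)))
      interval_cases q <;> simp [near_inl, pos]
    · refine W.step (d' := Sum.inl x) hKa hKb (near_refl _ _) ?_ fun r' hr => ?_
      · interval_cases q <;> simp [near_inl, pos]
      · rw [near_inr] at hr
        rcases hr with rfl | rfl | rfl | rfl
        · exact W.cap (Or.inr (Or.inr (Or.inr (by simp [near_inl]))))
        · exact kplus x _ _ rfl
        · exact kminus x _ _ rfl
        · exact W.cap (Or.inr (Or.inr (Or.inr (by simp [near_inl]))))
  refine W.step (c' := Sum.inl (pos r + p - 1)) (d' := Sum.inl (pos r - q + 1)) hKa hKb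
    (by simp [near_inl]) (by simp [near_inl]) fun r' hr => ?_
  have hstep : ∀ p' q' : ℕ, p' + q' ≤ p + q - 2 →
      pos r' + (p' : ZMod n) = pos r + p - 1 → pos r' - (q' : ZMod n) = pos r - q + 1 →
      W (GP n k) (shift (g * k) r) (shift (-(h * k)) r) (Sum.inl (pos r + p - 1))
        (Sum.inl (pos r - q + 1)) r' := by
    intro p' q' hpq' e1 e2
    refine iht (t - 1) (by omega) g h p' q' _ _ _ _ _ hgh (by omega)
      ⟨near_shift _ hr, near_shift _ hr⟩ ⟨?_, ?_⟩
    · simp [e1]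
    · simp [e2]
  have p1 : 1 ≤ p := by omega
  have p2 : 2 ≤ p := by omega
  have q1 : 1 ≤ q := by omega
  have q2 : 2 ≤ q := by omega
  rcases r with x | x
  · rw [near_inl] at hr
    rcases hr with rfl | rfl | rfl | rfl
    · exact hstep (p - 1) (q - 1) (by omega) (by push_cast [p1]; ring) (by push_cast [q1]; ring)
    · exact hstep (p - 2) q (by omega) (by push_cast [p2]; simp [pos]; ring) (by simp [pos]; ring)
    · exact hstep p (q - 2) (by omega) (by simp [pos]; ring) (by push_cast [q2]; simp [pos]; ring)
    · exact hstep (p - 1) (q - 1) (by omega) (by push_cast [p1]; simp [pos]; ring)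
        (by push_cast [q1]; simp [pos]; ring)
  · rw [near_inr] at hr
    rcases hr with rfl | rfl | rfl | rfl
    · exact hstep (p - 1) (q - 1) (by omega) (by push_cast [p1]; ring) (by push_cast [q1]; ring)
    · exact kplus x _ _ rfl
    · exact kminus x _ _ rfl
    · exact hstep (p - 1) (q - 1) (by omega) (by push_cast [p1]; simp [pos]; ring)
        (by push_cast [q1]; simp [pos]; ring)

theorem phase2' {n k : ℕ} [NeZero n] {a b r : GPVertex n} (y z : ZMod n)
    (ha : K k a r) (hb : K k b r) : W (GP n k) a b (Sum.inl y) (Sum.inl z) r := by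
  obtain ⟨g, h, hK⟩ := KP_start ha hb
  obtain ⟨p, q, hE⟩ := Ex_start y z r
  exact phase2 _ _ g h p q _ _ _ _ _ le_rfl le_rfl hK hE

theorem phase1 {n k : ℕ} [NeZero n] (w : ZMod n) : ∀ (t g h : ℕ) (a b c r : GPVertex n),
    g + h ≤ t → K k a r → Ch k b c r g h → W (GP n k) a b c (Sum.inl w) r := by
  intro t
  induction t using Nat.strong_induction_on with
  | _ t ih =>
  intro g h a b c r hgh ⟨j, hj⟩ hch
  obtain ⟨y, z, hy, hz, hcase⟩ := chase_move hch
  refine W.step hj hy hz (near_refl _ _) fun r' hr => ?_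
  rcases hcase with hc | hc | hc
  · exact phase2' _ _ (K_of_sync j hr) (hc r' hr)
  · exact (phase2' _ _ (K_of_sync j hr) (hc r' hr)).swap12
  · obtain ⟨g', h', hlt, hch'⟩ := hc r' hr
    exact ih (g' + h') (by omega) g' h' _ _ _ _ le_rfl (K_of_sync j hr) hch'

theorem phase1' {n k : ℕ} [NeZero n] {a r : GPVertex n} (x y z : ZMod n)
    (ha : K k a r) : W (GP n k) a (Sum.inl x) (Sum.inl y) (Sum.inl z) r := by
  obtain ⟨p, q, hE⟩ := Ch_start k x y r
  exact phase1 z _ p q _ _ _ _ le_rfl ha hE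

theorem phase0 {n k : ℕ} [NeZero n] (v w : ZMod n) : ∀ (t g h : ℕ) (b c r : GPVertex n),
    g + h ≤ t → Ch k b c r g h → W (GP n k) b c (Sum.inl v) (Sum.inl w) r := by
  intro t
  induction t using Nat.strong_induction_on with
  | _ t ih =>
  intro g h b c r hgh hch
  obtain ⟨y, z, hy, hz, hcase⟩ := chase_move hch
  refine W.step hy hz (near_refl _ _) (near_refl _ _) fun r' hr => ?_
  rcases hcase with hc | hc | hc
  · exact phase1' _ _ _ (hc r' hr)
  · exact (phase1' _ _ _ (hc r' hr)).swap01
  · obtain ⟨g', h', hlt, hch'⟩ := hc r' hr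
    exact ih (g' + h') (by omega) g' h' _ _ _ le_rfl hch'

theorem four_cops_win (n k : ℕ) [NeZero n] : CopsWinWith (GP n k) 4 := by
  refine copsWin_of_winIn _ ![Sum.inl 0, Sum.inl 0, Sum.inl 0, Sum.inl 0] fun r => ?_
  obtain ⟨p, q, hE⟩ := Ch_start k 0 0 r
  exact phase0 0 0 _ p q _ _ _ le_rfl hE


/-! ### The robber escapes three cops -/

/-- Vertices of the local model: level, outer coordinate, inner coordinate. -/
abbrev MV := Bool × ℤ × Fin 7

/-- The closed neighbourhood in the local model, listed; index `0` is the vertex itself. -/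
def nth (u : MV) (a : Fin 4) : MV :=
  match u with
  | (false, p, q) =>
    match a with
    | 0 => (false, p, q)
    | 1 => (false, p + 1, q)
    | 2 => (false, p - 1, q)
    | 3 => (true, p, q)
  | (true, p, q) =>
    match a with
    | 0 => (true, p, q)
    | 1 => (true, p, q + 1)
    | 2 => (true, p, q - 1)
    | 3 => (false, p, q)

def mnb (u : MV) : List MV := [nth u 0, nth u 1, nth u 2, nth u 3]

theorem mem_mnb {u w : MV} : w ∈ mnb u ↔ ∃ a, w = nth u a := by
  simp [mnb, Fin.exists_fin_succ]

theorem self_mem_mnb (u : MV) : u ∈ mnb u := by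
  rcases u with ⟨_ | _, p, q⟩ <;> simp [mnb, nth]

def mnear2 (v c : MV) : Prop := ∃ w ∈ mnb v, c ∈ mnb w

instance (v c : MV) : Decidable (mnear2 v c) := by unfold mnear2; infer_instance

def root (l : Bool) : MV := (l, 0, 0)

/-- Balls in the local model. -/
def ball (l : Bool) : ℕ → List MV
  | 0 => [root l]
  | N + 1 => ((ball l N).flatMap mnb).dedup

theorem mem_ball_succ {l : Bool} {N : ℕ} {u w : MV} (hu : u ∈ ball l N) (hw : w ∈ mnb u) :
    w ∈ ball l (N + 1) := by
  simp only [ball, List.mem_dedup, List.mem_flatMap]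
  exact ⟨u, hu, hw⟩

theorem ball_mono {l : Bool} {N : ℕ} {u : MV} (hu : u ∈ ball l N) : u ∈ ball l (N + 1) :=
  mem_ball_succ hu (self_mem_mnb u)

theorem mem_ball_near2 {l : Bool} {N : ℕ} {u w : MV} (hu : u ∈ ball l N) (hw : mnear2 u w) :
    w ∈ ball l (N + 2) := by
  obtain ⟨v, hv, hw⟩ := hw
  exact mem_ball_succ (mem_ball_succ hu hv) hw

theorem root_mem (l : Bool) : root l ∈ ball l 0 := by simp [ball]

theorem nth_mem (u : MV) (a : Fin 4) : nth u a ∈ mnb u := mem_mnb.2 ⟨a, rfl⟩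

/-- Maximal threat patterns of a single cop. -/
def lits : Bool → Fin 3 → List ℕ
  | false, 0 => [34, 130, 8320, 10240, 16512, 18432, 36687, 62031]
  | false, 1 => [1028, 2052, 8320, 10240, 16512, 18432, 33535, 62031]
  | false, 2 => [8200, 8320, 10240, 16392, 16512, 18432, 33535, 36687]
  | true, 0 => [130, 1058, 1060, 8320, 10240, 16512, 18432, 36687, 62031]
  | true, 1 => [1058, 1060, 2052, 8320, 10240, 16512, 18432, 33535, 62031]
  | true, 2 => [1058, 1060, 8200, 8320, 10240, 16392, 16512, 18432, 33535, 36687]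

/-- The pattern `L` records all threats of a cop at `u`. -/
def Cov (l : Bool) (L : ℕ) (u : MV) : Prop :=
  ∀ a : Fin 4, (u ∈ mnb (nth (root l) a) → L.testBit (4 * a) = true) ∧
    ∀ j : Fin 3, mnear2 (nth (nth (root l) a) j.succ) u → L.testBit (4 * a + 1 + j) = true

instance (l : Bool) (L : ℕ) (u : MV) : Decidable (Cov l L u) := by unfold Cov; infer_instance

theorem local_cov : ∀ (l : Bool) (j : Fin 3), ∀ u ∈ ball l 4,
    (∃ w ∈ mnb u, w ∉ mnb (root l) ∧ ¬ mnear2 (nth (root l) j.succ) w) →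
    ∃ L ∈ lits l j, Cov l L u := by
  decide +kernel

theorem local_comb : ∀ (l : Bool) (j : Fin 3), ∀ L₁ ∈ lits l j, ∀ L₂ ∈ lits l j, ∀ L₃ ∈ lits l j,
    ∃ a : Fin 4, (L₁ ||| L₂ ||| L₃).testBit (4 * a) = false ∧
      ∃ i : Fin 3, (L₁ ||| L₂ ||| L₃).testBit (4 * a + 1 + i) = false := by
  decide +kernel

theorem local_branch : ∀ l : Bool, ∀ u ∈ ball l 4, u ∉ mnb (root l) →
    ∃ j : Fin 3, ∀ j' : Fin 3, mnear2 (nth (root l) j'.succ) u → j' = j := by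
  decide +kernel

theorem local_ball3 : ∀ l : Bool, (ball l 3).length = 22 := by
  decide +kernel

theorem local_abs : ∀ l : Bool, ∀ u ∈ ball l 4, -4 ≤ u.2.1 ∧ u.2.1 ≤ 4 := by
  decide +kernel

theorem local_ne : ∀ l : Bool, ∀ a : Fin 4, ∀ j : Fin 3,
    nth (nth (root l) a) j.succ ≠ nth (root l) a := by
  decide +kernel

/-- Injectivity of the projection on balls of radius four. -/
def Inj (n k : ℕ) : Prop := ∀ l : Bool, ∀ u ∈ ball l 4, ∀ w ∈ ball l 4, u.1 = w.1 →
  (n : ℤ) ∣ (u.2.1 - w.2.1) + ((u.2.2.val : ℤ) - (w.2.2.val : ℤ)) * k → u = w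

instance (n k : ℕ) : Decidable (Inj n k) := by unfold Inj; infer_instance

theorem inj_small : ∀ p ∈ [(28, 8), (35, 10), (35, 15), (42, 6), (42, 12), (42, 18),
    (49, 7), (49, 14), (49, 21), (56, 8), (56, 16), (56, 24)], Inj p.1 p.2 := by
  decide +kernel

theorem inj_large (m i : ℕ) (hm : 9 ≤ m) (hi : i = 1 ∨ i = 2 ∨ i = 3) : Inj (7 * m) (i * m) := by
  intro l u hu w hw h1 hd
  have bu := local_abs l u hu
  have bw := local_abs l w hw
  obtain ⟨lu, pu, qu⟩ := u
  obtain ⟨lw, pw, qw⟩ := w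
  simp only at h1 hd bu bw
  push_cast at hd
  have hq1 := qu.isLt
  have hq2 := qw.isLt
  have hp : pu = pw := by
    have : (m : ℤ) ∣ pu - pw := by
      have h2 : (m : ℤ) ∣ (pu - pw) + ((qu.val : ℤ) - (qw.val : ℤ)) * (i * m) :=
        (Dvd.intro_left 7 rfl).trans hd
      refine (Int.dvd_add_left ?_).1 h2
      exact ⟨((qu.val : ℤ) - (qw.val : ℤ)) * i, by ring⟩
    have := Int.eq_zero_of_abs_lt_dvd this (by rw [abs_lt]; omega)
    omega
  subst hp
  have hq : (7 : ℤ) ∣ ((qu.val : ℤ) - qw.val) * i := by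
    have h3 : (7 * m : ℤ) ∣ (((qu.val : ℤ) - qw.val) * i) * m := by
      convert hd using 1
      ring
    exact Int.dvd_of_mul_dvd_mul_right (by omega) h3
  have : qu = qw := by
    apply Fin.ext
    rcases hi with rfl | rfl | rfl <;> push_cast at hq <;> omega
  subst this
  subst h1
  rfl

theorem inj_all (n k : ℕ)
    (hi : ∃ i, i ∈ ({1, 2, 3} : Set ℕ) ∧ i * n = 7 * k)
    (hbig : 42 ≤ n ∨ (n = 28 ∧ k = 8) ∨ (n = 35 ∧ k = 10) ∨ (n = 35 ∧ k = 15)) :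
    Inj n k ∧ n ∣ 7 * k ∧ 28 ≤ n := by
  obtain ⟨i, hi, hik⟩ := hi
  have hi : i = 1 ∨ i = 2 ∨ i = 3 := by simpa using hi
  refine ⟨?_, ⟨i, by rw [← hik, mul_comm]⟩, by omega⟩
  rcases hbig with hb | ⟨rfl, rfl⟩ | ⟨rfl, rfl⟩ | ⟨rfl, rfl⟩
  · have hnk : ∃ m, n = 7 * m ∧ k = i * m := by
      refine ⟨n / 7, ?_, ?_⟩ <;> rcases hi with rfl | rfl | rfl <;> omega
    obtain ⟨m, rfl, rfl⟩ := hnk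
    by_cases hm : 9 ≤ m
    · exact inj_large m i hm hi
    · have hm1 : 6 ≤ m := by omega
      have hm2 : m ≤ 8 := by omega
      interval_cases m <;> rcases hi with rfl | rfl | rfl <;> exact inj_small (_, _) (by simp)
  all_goals exact inj_small (_, _) (by simp)

section Lift

variable {n k : ℕ}

/-- Projection of the local model, centred at `x`. -/
def proj (k : ℕ) (x : ZMod n) : MV → GPVertex n
  | (false, p, q) => Sum.inl (x + (p : ZMod n) + (q.val : ZMod n) * (k : ZMod n))
  | (true, p, q) => Sum.inr (x + (p : ZMod n) + (q.val : ZMod n) * (k : ZMod n))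

theorem val_succ (h7 : (7 : ZMod n) * k = 0) (q : Fin 7) :
    ((q + 1).val : ZMod n) * (k : ZMod n) = (q.val : ZMod n) * k + k := by
  fin_cases q <;> simp <;> first | ring1 | linear_combination -h7

theorem val_pred (h7 : (7 : ZMod n) * k = 0) (q : Fin 7) :
    ((q - 1).val : ZMod n) * (k : ZMod n) = (q.val : ZMod n) * k - k := by
  have := val_succ h7 (q - 1)
  rw [sub_add_cancel] at this
  rw [this]; ring

theorem near_proj (h7 : (7 : ZMod n) * k = 0) (x : ZMod n) (u : MV) (v : GPVertex n) :
    Near (GP n k) (proj k x u) v ↔ ∃ w ∈ mnb u, proj k x w = v := by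
  rcases u with ⟨_ | _, p, q⟩
  · simp only [proj, near_inl, mnb, nth, List.mem_cons, List.not_mem_nil, or_false,
      exists_eq_or_imp, exists_eq_left]
    push_cast
    simp only [eq_comm (b := v), ← add_assoc, add_sub_assoc, add_right_comm _ (1 : ZMod n)]
    ring_nf
  · simp only [proj, near_inr, mnb, nth, List.mem_cons, List.not_mem_nil, or_false,
      exists_eq_or_imp, exists_eq_left, val_succ h7, val_pred h7]
    simp only [eq_comm (b := v), ← add_assoc, add_sub_assoc]

theorem near_symm {V : Type*} {G : SimpleGraph V} {u v : V} (h : Near G u v) : Near G v u :=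
  h.elim (fun h => Or.inl h.symm) fun h => Or.inr h.symm

def Near2 {V : Type*} (G : SimpleGraph V) (u v : V) : Prop := ∃ w, Near G u w ∧ Near G w v

theorem near2_proj (h7 : (7 : ZMod n) * k = 0) (x : ZMod n) (u : MV) (v : GPVertex n) :
    Near2 (GP n k) (proj k x u) v ↔ ∃ w, mnear2 u w ∧ proj k x w = v := by
  constructor
  · rintro ⟨y, h1, h2⟩
    obtain ⟨y, hy, rfl⟩ := (near_proj h7 x u _).1 h1
    obtain ⟨w, hw, rfl⟩ := (near_proj h7 x y _).1 h2
    exact ⟨w, ⟨y, hy, hw⟩, rfl⟩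
  · rintro ⟨w, ⟨y, hy, hw⟩, rfl⟩
    exact ⟨_, (near_proj h7 x u _).2 ⟨y, hy, rfl⟩, (near_proj h7 x y _).2 ⟨w, hw, rfl⟩⟩

theorem proj_inj (hI : Inj n k) (x : ZMod n) {l : Bool} {u w : MV} (hu : u ∈ ball l 4)
    (hw : w ∈ ball l 4) (h : proj k x u = proj k x w) : u = w := by
  have key : u.1 = w.1 ∧ x + (u.2.1 : ZMod n) + (u.2.2.val : ZMod n) * (k : ZMod n) =
      x + (w.2.1 : ZMod n) + (w.2.2.val : ZMod n) * (k : ZMod n) := by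
    rcases u with ⟨_ | _, p, q⟩ <;> rcases w with ⟨_ | _, p', q'⟩ <;> simpa [proj] using h
  refine hI l u hu w hw key.1 ?_
  rw [← ZMod.intCast_zmod_eq_zero_iff_dvd]
  push_cast
  linear_combination key.2

theorem proj_root (r : GPVertex n) : ∃ l, r = proj k (pos r) (root l) := by
  rcases r with x | x
  · exact ⟨false, by simp [proj, root, pos]⟩
  · exact ⟨true, by simp [proj, root, pos]⟩

/-- The robber's invariant, cops to move. -/
def Safe {ι V : Type*} (G : SimpleGraph V) (c : ι → V) (r : V) : Prop :=
  (∀ i, ¬ Near G r (c i)) ∧ ∃ v, G.Adj r v ∧ ∀ i, ¬ Near2 G v (c i)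

theorem robber_step (h7 : (7 : ZMod n) * k = 0) (hI : Inj n k) (c c' : Fin 3 → GPVertex n)
    (r : GPVertex n) (hS : Safe (GP n k) c r) (hc : ∀ i, Near (GP n k) (c i) (c' i)) :
    ∃ r', Near (GP n k) r r' ∧ Safe (GP n k) c' r' := by
  obtain ⟨l, hr⟩ := proj_root (k := k) r
  generalize pos r = x at hr
  subst hr
  obtain ⟨hS1, v, hv, hS2⟩ := hS
  have hv' : ∃ j : Fin 3, v = proj k x (nth (root l) j.succ) := by
    obtain ⟨w, hw, rfl⟩ := (near_proj h7 x _ _).1 (Or.inr hv)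
    obtain ⟨a, rfl⟩ := mem_mnb.1 hw
    refine Fin.cases (fun hv => ?_) (fun j _ => ⟨j, rfl⟩) a hv
    have : nth (root l) 0 = root l := by cases l <;> rfl
    rw [this] at hv
    exact (hv.ne rfl).elim
  obtain ⟨j, rfl⟩ := hv'
  have m1 : ∀ a, nth (root l) a ∈ ball l 1 := fun a => mem_ball_succ (root_mem l) (nth_mem _ _)
  have m2 : ∀ a b, nth (nth (root l) a) b ∈ ball l 2 :=
    fun a b => mem_ball_succ (m1 a) (nth_mem _ _)
  have hcov : ∀ i, ∃ L ∈ lits l j, ∀ a : Fin 4,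
      (Near (GP n k) (proj k x (nth (root l) a)) (c' i) → L.testBit (4 * a) = true) ∧
      ∀ b : Fin 3, Near2 (GP n k) (proj k x (nth (nth (root l) a) b.succ)) (c' i) →
        L.testBit (4 * a + 1 + b) = true := by
    intro i
    by_cases hex : ∃ u ∈ ball l 4, proj k x u = c' i
    · obtain ⟨u, hu, hui⟩ := hex
      have hpre := near_symm (hc i)
      rw [← hui] at hpre
      obtain ⟨w, hw, hwi⟩ := (near_proj h7 x u _).1 hpre
      obtain ⟨L, hL, hLu⟩ := local_cov l j u hu ⟨w, hw,
        fun h => hS1 i ((near_proj h7 x _ _).2 ⟨w, h, hwi⟩),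
        fun h => hS2 i ((near2_proj h7 x _ _).2 ⟨w, h, hwi⟩)⟩
      refine ⟨L, hL, fun a => ⟨fun h => (hLu a).1 ?_, fun b h => (hLu a).2 b ?_⟩⟩
      · obtain ⟨y, hy, hyi⟩ := (near_proj h7 x _ _).1 h
        rwa [proj_inj hI x hu (ball_mono (ball_mono (mem_ball_succ (m1 a) hy)))
          (hui.trans hyi.symm)]
      · obtain ⟨y, hy, hyi⟩ := (near2_proj h7 x _ _).1 h
        rwa [proj_inj hI x hu (mem_ball_near2 (m2 _ _) hy) (hui.trans hyi.symm)]
    · have : ∃ L, L ∈ lits l j := by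
        refine List.exists_mem_of_ne_nil _ ?_
        clear * -; revert l j; decide
      obtain ⟨L, hL⟩ := this
      refine ⟨L, hL, fun a => ⟨fun h => (hex ?_).elim, fun b h => (hex ?_).elim⟩⟩
      · obtain ⟨y, hy, hyi⟩ := (near_proj h7 x _ _).1 h
        exact ⟨y, ball_mono (ball_mono (mem_ball_succ (m1 a) hy)), hyi⟩
      · obtain ⟨y, hy, hyi⟩ := (near2_proj h7 x _ _).1 h
        exact ⟨y, mem_ball_near2 (m2 _ _) hy, hyi⟩
  choose L hL hcv using hcov
  obtain ⟨a, ha, b, hb⟩ := local_comb l j _ (hL 0) _ (hL 1) _ (hL 2)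
  simp only [Nat.testBit_or, Bool.or_eq_false_iff] at ha hb
  have ha' : ∀ i, (L i).testBit (4 * a) = false := by
    intro i; fin_cases i
    exacts [ha.1.1, ha.1.2, ha.2]
  have hb' : ∀ i, (L i).testBit (4 * a + 1 + b) = false := by
    intro i; fin_cases i
    exacts [hb.1.1, hb.1.2, hb.2]
  refine ⟨proj k x (nth (root l) a), (near_proj h7 x _ _).2 ⟨_, nth_mem _ _, rfl⟩,
    fun i h => ?_, proj k x (nth (nth (root l) a) b.succ), ?_, fun i h => ?_⟩
  · exact absurd ((hcv i a).1 h) (by simp [ha' i])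
  · rcases (near_proj h7 x (nth (root l) a) _).2 ⟨_, nth_mem _ b.succ, rfl⟩ with h | h
    · exact (local_ne l a b (proj_inj hI x (ball_mono (ball_mono (m2 _ _)))
        (ball_mono (ball_mono (ball_mono (m1 _)))) h)).elim
    · exact h
  · exact absurd ((hcv i a).2 b h) (by simp [hb' i])

/-- A vertex where the robber may start. -/
theorem robber_start [NeZero n] (h7 : (7 : ZMod n) * k = 0) (hI : Inj n k) (hn : 28 ≤ n)
    (c : Fin 3 → GPVertex n) : ∃ r, Safe (GP n k) c r := by
  classical
  obtain ⟨l₀, h0⟩ := proj_root (k := k) (c 0)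
  obtain ⟨l₁, h1⟩ := proj_root (k := k) (c 1)
  obtain ⟨l₂, h2⟩ := proj_root (k := k) (c 2)
  let S0 : Finset (GPVertex n) := (ball l₀ 3).toFinset.image (proj k (pos (c 0)))
  let S1 : Finset (GPVertex n) := (mnb (root l₁)).toFinset.image (proj k (pos (c 1)))
  let S2 : Finset (GPVertex n) := (mnb (root l₂)).toFinset.image (proj k (pos (c 2)))
  have c0 : S0.card ≤ 22 := Finset.card_image_le.trans
    ((List.toFinset_card_le _).trans (local_ball3 l₀).le)
  have c1 : S1.card ≤ 4 := Finset.card_image_le.trans ((List.toFinset_card_le _).trans (by simp [mnb]))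
  have c2 : S2.card ≤ 4 := Finset.card_image_le.trans ((List.toFinset_card_le _).trans (by simp [mnb]))
  have hcard : (S0 ∪ S1 ∪ S2).card < Fintype.card (GPVertex n) := by
    have e : Fintype.card (GPVertex n) = n + n := by
      rw [Fintype.card_sum, ZMod.card]
    have := Finset.card_union_le (S0 ∪ S1) S2
    have := Finset.card_union_le S0 S1
    omega
  obtain ⟨r, hr⟩ : ∃ r, r ∉ S0 ∪ S1 ∪ S2 := by
    by_contra hcon
    push Not at hcon
    have : S0 ∪ S1 ∪ S2 = Finset.univ := Finset.eq_univ_iff_forall.2 hcon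
    rw [this, Finset.card_univ] at hcard
    exact lt_irrefl _ hcard
  simp only [Finset.mem_union, not_or] at hr
  obtain ⟨⟨hr0, hr1⟩, hr2⟩ := hr
  have n0 : ∀ v, Near (GP n k) r v → ¬ Near2 (GP n k) v (c 0) := by
    rintro v hv ⟨w, hvw, hw⟩
    have e1 := near_symm hw
    rw [h0] at e1
    obtain ⟨w', hw', rfl⟩ := (near_proj h7 _ _ _).1 e1
    obtain ⟨v', hv', rfl⟩ := (near_proj h7 _ _ _).1 (near_symm hvw)
    obtain ⟨r', hr', rfl⟩ := (near_proj h7 _ _ _).1 (near_symm hv)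
    exact hr0 (Finset.mem_image_of_mem _ (List.mem_toFinset.2
      (mem_ball_succ (mem_ball_succ (mem_ball_succ (root_mem _) hw') hv') hr')))
  have n1 : ¬ Near (GP n k) r (c 1) := by
    intro h
    have e1 := near_symm h
    rw [h1] at e1
    obtain ⟨r', hr', rfl⟩ := (near_proj h7 _ _ _).1 e1
    exact hr1 (Finset.mem_image_of_mem _ (List.mem_toFinset.2 hr'))
  have n2 : ¬ Near (GP n k) r (c 2) := by
    intro h
    have e1 := near_symm h
    rw [h2] at e1
    obtain ⟨r', hr', rfl⟩ := (near_proj h7 _ _ _).1 e1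
    exact hr2 (Finset.mem_image_of_mem _ (List.mem_toFinset.2 hr'))
  clear hr0 hr1 hr2 hcard c0 c1 c2 S0 S1 S2
  obtain ⟨l, hr⟩ := proj_root (k := k) r
  generalize pos r = x at hr
  subst hr
  have m1 : ∀ a, nth (root l) a ∈ ball l 1 := fun a => mem_ball_succ (root_mem l) (nth_mem _ _)
  have hb : ∀ v, ¬ Near (GP n k) (proj k x (root l)) v → ∃ j : Fin 3, ∀ j' : Fin 3,
      Near2 (GP n k) (proj k x (nth (root l) j'.succ)) v → j' = j := by
    intro v hv
    by_cases hex : ∃ u ∈ ball l 4, proj k x u = v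
    · obtain ⟨u, hu, rfl⟩ := hex
      obtain ⟨j, hj⟩ := local_branch l u hu
        fun h => hv ((near_proj h7 x _ _).2 ⟨u, h, rfl⟩)
      refine ⟨j, fun j' h => hj j' ?_⟩
      obtain ⟨y, hy, hyi⟩ := (near2_proj h7 x _ _).1 h
      rwa [proj_inj hI x hu (ball_mono (mem_ball_near2 (m1 _) hy)) hyi.symm]
    · refine ⟨0, fun j' h => (hex ?_).elim⟩
      obtain ⟨y, hy, hyi⟩ := (near2_proj h7 x _ _).1 h
      exact ⟨y, ball_mono (mem_ball_near2 (m1 _) hy), hyi⟩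
  obtain ⟨j₁, hj₁⟩ := hb _ n1
  obtain ⟨j₂, hj₂⟩ := hb _ n2
  obtain ⟨j, hja, hjb⟩ : ∃ j : Fin 3, j ≠ j₁ ∧ j ≠ j₂ := by
    clear * -; revert j₁ j₂; decide
  have hnear : Near (GP n k) (proj k x (root l)) (proj k x (nth (root l) j.succ)) :=
    (near_proj h7 x _ _).2 ⟨_, nth_mem _ _, rfl⟩
  refine ⟨proj k x (root l), fun i => ?_, proj k x (nth (root l) j.succ), ?_, fun i => ?_⟩
  · fin_cases i
    · intro h
      exact n0 _ (near_refl _ _) ⟨_, near_refl _ _, h⟩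
    · exact n1
    · exact n2
  · rcases hnear with h | h
    · have e0 : nth (root l) 0 = root l := by cases l <;> rfl
      have := local_ne l 0 j
      rw [e0] at this
      exact (this (proj_inj hI x (ball_mono (ball_mono (ball_mono (m1 _))))
        (ball_mono (ball_mono (ball_mono (ball_mono (root_mem l))))) h)).elim
    · exact h
  · fin_cases i
    · exact n0 _ hnear
    · exact fun h => hja (hj₁ _ h)
    · exact fun h => hjb (hj₂ _ h)

end Lift

theorem robber_wins {V : Type*} (G : SimpleGraph V) (m : ℕ) (f : Fin 3 → Fin m)
    (hf : Function.Surjective f)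
    (hstart : ∀ c : Fin 3 → V, ∃ r, Safe G c r)
    (hstep : ∀ (c c' : Fin 3 → V) (r : V), Safe G c r → (∀ i, Near G (c i) (c' i)) →
      ∃ r', Near G r r' ∧ Safe G c' r') : ¬ CopsWinWith G m := by
  rintro ⟨init, move, hmove, hwin⟩
  obtain ⟨r0, hr0⟩ := hstart (init ∘ f)
  have hnext : ∀ s : {s : (Fin m → V) × V // Safe G (s.1 ∘ f) s.2},
      ∃ r', Near G s.1.2 r' ∧ Safe G (move s.1.1 s.1.2 ∘ f) r' := fun s =>
    hstep (s.1.1 ∘ f) _ _ s.2 fun i => hmove _ _ _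
  choose g hg hgs using hnext
  let st : ℕ → {s : (Fin m → V) × V // Safe G (s.1 ∘ f) s.2} := fun t =>
    Nat.rec ⟨(init, r0), hr0⟩ (fun _ s => ⟨(move s.1.1 s.1.2, g s), hgs s⟩) t
  let r : ℕ → V := fun t => (st t).1.2
  have hcs : ∀ t, copSeq init move r t = (st t).1.1 := by
    intro t
    induction t with
    | zero => rfl
    | succ t ih =>
      show move (copSeq init move r t) (r t) = _
      rw [ih]
  obtain ⟨t, i, hti⟩ := hwin r fun t => hg (st t)
  obtain ⟨j, rfl⟩ := hf i
  have hs := (st t).2.1 j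
  rcases hti with h | h
  · rw [hcs] at h
    exact hs (Or.inl h)
  · have h1 := hmove (copSeq init move r t) (r t) (f j)
    have h2 : move (copSeq init move r t) (r t) (f j) = r t := h
    rw [h2, hcs] at h1
    exact hs (near_symm h1)

theorem not_three_cops (n k m : ℕ) [NeZero n] (hm : m < 4) (h7 : (7 : ZMod n) * k = 0)
    (hI : Inj n k) (hn : 28 ≤ n) : ¬ CopsWinWith (GP n k) m := by
  rcases Nat.eq_zero_or_pos m with rfl | hpos
  · rintro ⟨init, move, -, hwin⟩
    obtain ⟨t, i, -⟩ := hwin (fun _ => Sum.inl 0) fun t => Or.inl rfl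
    exact i.elim0
  · refine robber_wins _ m (fun i => ⟨min i.val (m - 1), by omega⟩) ?_
      (robber_start h7 hI hn) (robber_step h7 hI)
    intro j
    refine ⟨⟨j.val, by omega⟩, ?_⟩
    apply Fin.ext
    simp
    omega

end CopProof

/-- If `i·n = 7k` for some `i ∈ {1,2,3}`, `2k < n`, and either `n ≥ 42` or
`(n,k) ∈ {(28,8),(35,10),(35,15)}`, then the cop number of `GP(n,k)` is `4`. -/
theorem copNumber_GP_eq_four (n k : ℕ)
    (hn : 0 < n) (hk : 0 < k)
    (hi : ∃ i, i ∈ ({1, 2, 3} : Set ℕ) ∧ i * n = 7 * k)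
    (h2k : 2 * k < n)
    (hbig : 42 ≤ n ∨ (n = 28 ∧ k = 8) ∨ (n = 35 ∧ k = 10) ∨ (n = 35 ∧ k = 15)) :
    copNumber (GP n k) = 4 := by
  have : NeZero n := ⟨hn.ne'⟩
  obtain ⟨hI, hdvd, h28⟩ := CopProof.inj_all n k hi hbig
  have h7 : (7 : ZMod n) * k = 0 := by
    have := (ZMod.natCast_eq_zero_iff (7 * k) n).2 hdvd
    exact_mod_cast this
  refine le_antisymm (Nat.sInf_le (CopProof.four_cops_win n k)) ?_
  refine le_csInf ⟨4, CopProof.four_cops_win n k⟩ fun m hm => ?_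
  by_contra hlt
  exact CopProof.not_three_cops n k m (by omega) h7 hI h28 hm
end

section
/- Let n and k be positive integers with i·n = 7k for some i ∈ {1,2,3} and 2k < n, and suppose that either n ≥ 42 or (n,k) ∈ {(28,8),(35,10),(35,15)}. Then three cops do not have a winning strategy in the game of cops and robbers on the generalised Petersen graph GP(n,k); that is, the cop number of GP(n,k) is strictly greater than 3. -/
open SimpleGraph

/-! ### The local model -/

/-- A vertex of the infinite local model: `(t, x, y)` stands for the outer (`t = false`) or inner
(`t = true`) vertex with index `x + k * y`. -/
abbrev Pt := Bool × ℤ × ℤ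

/-- Representative of `y` modulo 7, for `-4 ≤ y ≤ 4`. -/
def nrm (y : ℤ) : ℤ := if 3 < y then y - 7 else if y < -3 then y + 7 else y

/-- Neighbours in the local model. -/
def nbl : Pt → List Pt
  | (false, x, y) => [(false, x + 1, y), (false, x - 1, y), (true, x, y)]
  | (true, x, y) => [(true, x, nrm (y + 1)), (true, x, nrm (y - 1)), (false, x, y)]

/-- Closed neighbourhood in the local model. -/
def cll (p : Pt) : List Pt := p :: nbl p

/-- Closed ball of radius 2 in the local model (with repetitions). -/
def cll2 (p : Pt) : List Pt := (cll p).flatMap cll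

/-! Below: the ball of radius 4 around the origin of each type, the vertices at distance 0 or 2
from it, and the possible signatures of a cop. -/

def ballL : Bool → List Pt
  | false => [(false, 0, 0), (false, 1, 0), (false, -1, 0), (true, 0, 0), (false, 2, 0), (true, 1, 0),
    (false, -2, 0), (true, -1, 0), (true, 0, 1), (true, 0, -1), (false, 3, 0), (true, 2, 0),
    (true, 1, 1), (true, 1, -1), (false, -3, 0), (true, -2, 0), (true, -1, 1), (true, -1, -1),
    (true, 0, 2), (false, 0, 1), (true, 0, -2), (false, 0, -1), (false, 4, 0), (true, 3, 0),
    (true, 2, 1), (true, 2, -1), (true, 1, 2), (false, 1, 1), (true, 1, -2), (false, 1, -1),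
    (false, -4, 0), (true, -3, 0), (true, -2, 1), (true, -2, -1), (true, -1, 2), (false, -1, 1),
    (true, -1, -2), (false, -1, -1), (true, 0, 3), (false, 0, 2), (true, 0, -3), (false, 0, -2)]
  | true => [(true, 0, 0), (true, 0, 1), (true, 0, -1), (false, 0, 0), (true, 0, 2), (false, 0, 1),
    (true, 0, -2), (false, 0, -1), (false, 1, 0), (false, -1, 0), (true, 0, 3), (false, 0, 2),
    (false, 1, 1), (false, -1, 1), (true, 0, -3), (false, 0, -2), (false, 1, -1), (false, -1, -1),
    (false, 2, 0), (true, 1, 0), (false, -2, 0), (true, -1, 0), (false, 0, 3), (false, 1, 2),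
    (false, -1, 2), (false, 2, 1), (true, 1, 1), (false, -2, 1), (true, -1, 1), (false, 0, -3),
    (false, 1, -2), (false, -1, -2), (false, 2, -1), (true, 1, -1), (false, -2, -1), (true, -1, -1),
    (false, 3, 0), (true, 2, 0), (false, -3, 0), (true, -2, 0)]

def secL : Bool → List Pt
  | false => [(false, 0, 0), (false, 2, 0), (true, 1, 0), (false, -2, 0), (true, -1, 0), (true, 0, 1),
    (true, 0, -1)]
  | true => [(true, 0, 0), (true, 0, 2), (false, 0, 1), (true, 0, -2), (false, 0, -1), (false, 1, 0),
    (false, -1, 0)]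

def sigL : Bool → List ℕ
  | false => [0, 2, 4, 8, 16, 32,
    36, 48, 64, 68, 80, 135,
    281, 609, 1023]
  | true => [0, 2, 4, 8, 10, 16,
    32, 36, 48, 64, 68, 80,
    135, 281, 609, 1023]

/-- The `j`-th vertex at distance 0 or 2. -/
def sec (t : Bool) (j : ℕ) : Pt := (secL t).getD j (t, 0, 0)

/-- The `j`-th neighbour of the origin. -/
def fst1 (t : Bool) (j : ℕ) : Pt := (nbl (t, 0, 0)).getD j (t, 0, 0)

theorem sec_ball : ∀ t, ∀ j < 7, ∀ q ∈ cll2 (sec t j), q ∈ ballL t := by decide +kernel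

theorem sec_nbr : ∀ t, ∀ j < 7, ∃ v ∈ nbl (t, 0, 0), sec t j ∈ nbl v := by decide +kernel

theorem fst1_all : ∀ t, ∀ q ∈ nbl (t, 0, 0), ∃ j < 3, fst1 t j = q := by decide +kernel

/-- The signature `s` correctly describes a cop at the local vertex `l`. -/
def SigOK (t : Bool) (l : Pt) (s : ℕ) : Prop :=
  (∀ j < 7, l ∈ cll2 (sec t j) → s.testBit j = true) ∧
    (∀ j < 3, s.testBit (7 + j) = true → l ∈ cll (fst1 t j))

instance (t : Bool) (l : Pt) (s : ℕ) : Decidable (SigOK t l s) := by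
  unfold SigOK
  exact inferInstance

theorem sig_exists : ∀ t, ∀ l ∈ ballL t, ∃ s ∈ sigL t, SigOK t l s := by decide +kernel

theorem sig_zero : ∀ t, 0 ∈ sigL t := by decide

theorem sig_cover : ∀ t, ∀ a ∈ sigL t, ∀ b ∈ sigL t, ∀ c ∈ sigL t,
    (∀ j < 7, (a.testBit j || b.testBit j || c.testBit j) = true) →
    ∀ j < 3, (a.testBit (7 + j) || b.testBit (7 + j) || c.testBit (7 + j)) = true := by
  decide +kernel

theorem ball_bound : ∀ t, ∀ p ∈ ballL t,
    -4 ≤ p.2.1 ∧ p.2.1 ≤ 4 ∧ -3 ≤ p.2.2 ∧ p.2.2 ≤ 3 := by decide +kernel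

theorem ball_inj_small : ∀ t, ∀ p ∈ ballL t, ∀ q ∈ ballL t, p.1 = q.1 → p ≠ q →
    ∀ mi ∈ ([(4, 2), (5, 2), (5, 3), (6, 1), (6, 2), (6, 3), (7, 1), (7, 2), (7, 3),
      (8, 1), (8, 2), (8, 3)] : List (ℤ × ℤ)),
    (p.2.1 - q.2.1 + mi.2 * mi.1 * (p.2.2 - q.2.2)) % (7 * mi.1) ≠ 0 := by decide +kernel

/-! ### Mapping the local model to `GP n k` -/

/-- The local chart around index `r`. -/
def chart {n : ℕ} (k : ℕ) (r : ZMod n) : Pt → GPVertex n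
  | (false, x, y) => Sum.inl (r + x + k * y)
  | (true, x, y) => Sum.inr (r + x + k * y)

theorem chart_nrm {n k : ℕ} (h7 : (7 : ZMod n) * k = 0) (y : ℤ) :
    (k : ZMod n) * (nrm y : ℤ) = k * y := by
  unfold nrm
  split_ifs
  · push_cast
    linear_combination -h7
  · push_cast
    linear_combination h7
  · rfl

theorem chart_adj {n k : ℕ} (h7 : (7 : ZMod n) * k = 0) (h1 : (1 : ZMod n) ≠ 0)
    (hk : (k : ZMod n) ≠ 0) (r : ZMod n) (p : Pt) (c : GPVertex n) :
    (GP n k).Adj (chart k r p) c ↔ ∃ q ∈ nbl p, chart k r q = c := by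
  obtain ⟨t, x, y⟩ := p
  cases t <;> cases c <;>
    simp only [GP, SimpleGraph.fromRel_adj, GPRel, chart, nbl, List.mem_cons, List.not_mem_nil,
      or_false, exists_eq_or_imp, exists_eq_left, chart_nrm h7, Sum.inl.injEq, Sum.inr.injEq,
      reduceCtorEq, ne_eq, not_false_eq_true, true_and, false_or] <;> push_cast
  · rename_i c
    constructor
    · rintro ⟨-, h | h⟩
      · left; rw [h]; ring
      · right; linear_combination h
    · rintro (h | h)
      · refine ⟨fun e => h1 ?_, Or.inl ?_⟩
        · linear_combination h - e
        · rw [← h]; ring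
      · refine ⟨fun e => h1 ?_, Or.inr ?_⟩
        · linear_combination e - h
        · linear_combination h
  · exact eq_comm
  · rename_i c
    constructor
    · rintro ⟨-, h | h⟩
      · left; rw [h]; ring
      · right; linear_combination h
    · rintro (h | h)
      · refine ⟨fun e => hk ?_, Or.inl ?_⟩
        · linear_combination h - e
        · rw [← h]; ring
      · refine ⟨fun e => hk ?_, Or.inr ?_⟩
        · linear_combination e - h
        · linear_combination h

/-- Equal or adjacent. -/
def Near {V : Type*} (G : SimpleGraph V) (a b : V) : Prop := b = a ∨ G.Adj a b

theorem Near.symm {V : Type*} {G : SimpleGraph V} {a b : V} (h : Near G a b) : Near G b a := by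
  rcases h with h | h
  · exact Or.inl h.symm
  · exact Or.inr h.symm

/-- Within distance two. -/
def Near2 {V : Type*} (G : SimpleGraph V) (a b : V) : Prop := ∃ x, Near G a x ∧ Near G x b

theorem chart_near {n k : ℕ} (h7 : (7 : ZMod n) * k = 0) (h1 : (1 : ZMod n) ≠ 0)
    (hk : (k : ZMod n) ≠ 0) (r : ZMod n) (p : Pt) (c : GPVertex n) :
    Near (GP n k) (chart k r p) c ↔ ∃ q ∈ cll p, chart k r q = c := by
  unfold Near cll
  rw [chart_adj h7 h1 hk]
  simp [eq_comm]

theorem chart_near2 {n k : ℕ} (h7 : (7 : ZMod n) * k = 0) (h1 : (1 : ZMod n) ≠ 0)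
    (hk : (k : ZMod n) ≠ 0) (r : ZMod n) (p : Pt) (c : GPVertex n) :
    Near2 (GP n k) (chart k r p) c ↔ ∃ q ∈ cll2 p, chart k r q = c := by
  unfold Near2 cll2
  constructor
  · rintro ⟨x, hx, hc⟩
    obtain ⟨q, hq, rfl⟩ := (chart_near h7 h1 hk r p x).1 hx
    obtain ⟨q', hq', rfl⟩ := (chart_near h7 h1 hk r q c).1 hc
    exact ⟨q', List.mem_flatMap.2 ⟨q, hq, hq'⟩, rfl⟩
  · rintro ⟨q', hq', rfl⟩
    obtain ⟨q, hq, hq'⟩ := List.mem_flatMap.1 hq'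
    exact ⟨chart k r q, (chart_near h7 h1 hk r p _).2 ⟨q, hq, rfl⟩,
      (chart_near h7 h1 hk r q _).2 ⟨q', hq', rfl⟩⟩

/-- The parameters allowed in the theorem, with `n = 7 m`, `k = i m`. -/
def GoodParam (m i : ℕ) : Prop :=
  (i = 1 ∨ i = 2 ∨ i = 3) ∧ (6 ≤ m ∨ (m = 4 ∧ i = 2) ∨ (m = 5 ∧ i = 2) ∨ (m = 5 ∧ i = 3))

theorem chart_inj {m i : ℕ} (hg : GoodParam m i) (r : ZMod (7 * m)) (t : Bool) (p q : Pt)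
    (hp : p ∈ ballL t) (hq : q ∈ ballL t) (h : chart (i * m) r p = chart (i * m) r q) :
    p = q := by
  obtain ⟨hi, hm⟩ := hg
  have hb1 := ball_bound t p hp
  have hb2 := ball_bound t q hq
  have h1 : p.1 = q.1 ∧ (((p.2.1 - q.2.1 + i * m * (p.2.2 - q.2.2) : ℤ)) : ZMod (7 * m)) = 0 := by
    obtain ⟨a, x, y⟩ := p
    obtain ⟨b, x', y'⟩ := q
    cases a <;> cases b <;> simp [chart] at h ⊢ <;> linear_combination h
  obtain ⟨ht, hz⟩ := h1
  rw [ZMod.intCast_zmod_eq_zero_iff_dvd] at hz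
  push_cast at hz
  by_contra hne
  by_cases h9 : 9 ≤ m
  · obtain ⟨e, he⟩ := hz
    have hd : (m : ℤ) ∣ p.2.1 - q.2.1 := ⟨7 * e - i * (p.2.2 - q.2.2), by linear_combination he⟩
    have h0 : p.2.1 - q.2.1 = 0 := by
      apply Int.eq_zero_of_abs_lt_dvd hd
      rw [abs_lt]
      omega
    have hy : (i : ℤ) * (p.2.2 - q.2.2) = 7 * e := by
      have hm0 : (m : ℤ) ≠ 0 := by omega
      apply mul_left_cancel₀ hm0
      linear_combination he - h0
    have hy2 : p.2.2 = q.2.2 := by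
      rcases hi with rfl | rfl | rfl <;> push_cast at hy <;> omega
    apply hne
    exact Prod.ext ht (Prod.ext (by omega) hy2)
  · refine ball_inj_small t p hp q hq ht hne ((m : ℤ), (i : ℤ)) ?_ (Int.emod_eq_zero_of_dvd hz)
    have : 4 ≤ m := by omega
    have : m ≤ 8 := by omega
    interval_cases m <;> rcases hi with rfl | rfl | rfl <;> first | omega | simp

theorem cop_sig {m i : ℕ} (hg : GoodParam m i) (h7 : (7 : ZMod (7 * m)) * (i * m : ℕ) = 0)
    (h1 : (1 : ZMod (7 * m)) ≠ 0) (hk : ((i * m : ℕ) : ZMod (7 * m)) ≠ 0)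
    (r : ZMod (7 * m)) (t : Bool) (c : GPVertex (7 * m)) :
    ∃ s ∈ sigL t,
      (∀ j < 7, Near2 (GP (7 * m) (i * m)) (chart (i * m) r (sec t j)) c → s.testBit j = true) ∧
      (∀ j < 3, s.testBit (7 + j) = true →
        Near (GP (7 * m) (i * m)) (chart (i * m) r (fst1 t j)) c) := by
  by_cases hc : ∃ l ∈ ballL t, chart (i * m) r l = c
  · obtain ⟨l, hl, rfl⟩ := hc
    obtain ⟨s, hs, hs1, hs2⟩ := sig_exists t l hl
    refine ⟨s, hs, fun j hj hn => ?_, fun j hj hb => ?_⟩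
    · obtain ⟨q, hq, he⟩ := (chart_near2 h7 h1 hk r _ _).1 hn
      have := chart_inj hg r t q l (sec_ball t j hj q hq) hl he
      exact hs1 j hj (this ▸ hq)
    · exact (chart_near h7 h1 hk r _ _).2 ⟨l, hs2 j hj hb, rfl⟩
  · refine ⟨0, sig_zero t, fun j hj hn => ?_, fun j hj hb => ?_⟩
    · obtain ⟨q, hq, he⟩ := (chart_near2 h7 h1 hk r _ _).1 hn
      exact absurd ⟨q, sec_ball t j hj q hq, he⟩ hc
    · simp at hb

/-- The robber at `r` is safe (cops to move): some neighbour `u` of `r` has no cop within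
distance two. -/
def Safe {V : Type*} (G : SimpleGraph V) (r : V) (C : Fin 3 → V) : Prop :=
  ∃ u, G.Adj r u ∧ ∀ i, ¬ Near2 G u (C i)

/-- Key lemma: if some neighbour of `r` is not attacked then the robber has a safe move. -/
theorem key {m i : ℕ} (hg : GoodParam m i) (h7 : (7 : ZMod (7 * m)) * (i * m : ℕ) = 0)
    (h1 : (1 : ZMod (7 * m)) ≠ 0) (hk : ((i * m : ℕ) : ZMod (7 * m)) ≠ 0)
    (r w : GPVertex (7 * m)) (C : Fin 3 → GPVertex (7 * m))
    (hw : (GP (7 * m) (i * m)).Adj r w) (hC : ∀ j, ¬ Near (GP (7 * m) (i * m)) w (C j)) :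
    ∃ v, (GP (7 * m) (i * m)).Adj r v ∧ Safe (GP (7 * m) (i * m)) v C := by
  obtain ⟨t, r, rfl⟩ : ∃ (t : Bool) (z : ZMod (7 * m)), chart (i * m) z (t, 0, 0) = r := by
    rcases r with r | r
    · exact ⟨false, r, by simp [chart]⟩
    · exact ⟨true, r, by simp [chart]⟩
  by_contra hcon
  have hcov : ∀ j < 7, ∃ a, Near2 (GP (7 * m) (i * m)) (chart (i * m) r (sec t j)) (C a) := by
    intro j hj
    by_contra hno
    push Not at hno
    obtain ⟨v, hv, hvs⟩ := sec_nbr t j hj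
    exact hcon ⟨chart (i * m) r v, (chart_adj h7 h1 hk r _ _).2 ⟨v, hv, rfl⟩,
      chart (i * m) r (sec t j), (chart_adj h7 h1 hk r _ _).2 ⟨_, hvs, rfl⟩, hno⟩
  obtain ⟨a, ha, ha1, ha2⟩ := cop_sig hg h7 h1 hk r t (C 0)
  obtain ⟨b, hb, hb1, hb2⟩ := cop_sig hg h7 h1 hk r t (C 1)
  obtain ⟨c, hc, hc1, hc2⟩ := cop_sig hg h7 h1 hk r t (C 2)
  have hall := sig_cover t a ha b hb c hc (by
    intro j hj
    obtain ⟨e, he⟩ := hcov j hj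
    fin_cases e
    · simp [ha1 j hj he]
    · simp [hb1 j hj he]
    · simp [hc1 j hj he])
  obtain ⟨q, hq, rfl⟩ := (chart_adj h7 h1 hk r _ _).1 hw
  obtain ⟨j, hj, rfl⟩ := fst1_all t q hq
  have h := hall j hj
  simp only [Bool.or_eq_true] at h
  rcases h with (h | h) | h
  · exact hC 0 (ha2 j hj h)
  · exact hC 1 (hb2 j hj h)
  · exact hC 2 (hc2 j hj h)

/-! ### The game -/

/-- Robber's evasion, abstractly. -/
theorem evade {V : Type*} (G : SimpleGraph V)
    (hkey : ∀ (r w : V) (C : Fin 3 → V), G.Adj r w → (∀ j, ¬ Near G w (C j)) →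
      ∃ v, G.Adj r v ∧ Safe G v C)
    (hstart : ∀ C : Fin 3 → V, ∃ r w, G.Adj r w ∧ ∀ j, ¬ Near G w (C j)) :
    ¬ CopsWinWith G 3 := by
  rintro ⟨init, move, hmove, hwin⟩
  have hstep : ∀ (r : V) (C : Fin 3 → V), ∃ v, Safe G r C →
      G.Adj r v ∧ Safe G v (move C r) := by
    intro r C
    by_cases hS : Safe G r C
    · obtain ⟨u, hu, hC⟩ := hS
      obtain ⟨v, hv⟩ := hkey r u (move C r) hu (fun j hn =>
        hC j ⟨_, hn, Near.symm (hmove C r j)⟩)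
      exact ⟨v, fun _ => hv⟩
    · exact ⟨r, fun h => absurd h hS⟩
  choose next hnext using hstep
  obtain ⟨r', w, hw, hC⟩ := hstart init
  obtain ⟨r0, -, hr0⟩ := hkey r' w init hw hC
  let st : ℕ → V × (Fin 3 → V) := fun t =>
    Nat.rec (r0, init) (fun _ s => (next s.1 s.2, move s.2 s.1)) t
  have hst : ∀ t, st (t + 1) = (next (st t).1 (st t).2, move (st t).2 (st t).1) := fun t => rfl
  have hsafe : ∀ t, Safe G (st t).1 (st t).2 := by
    intro t
    induction t with
    | zero => exact hr0
    | succ t ih =>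
      rw [hst]
      exact (hnext _ _ ih).2
  have hseq : ∀ t, copSeq init move (fun t => (st t).1) t = (st t).2 := by
    intro t
    induction t with
    | zero => rfl
    | succ t ih =>
      rw [hst]
      simp only [copSeq, ih]
  obtain ⟨t, i, h⟩ := hwin (fun t => (st t).1) (by
    intro t
    right
    simp only [hst]
    exact (hnext _ _ (hsafe t)).1)
  obtain ⟨u, hu, hC⟩ := hsafe t
  rcases h with h | h
  · rw [hseq] at h
    exact hC i ⟨(st t).1, Or.inr hu.symm, Or.inl h⟩
  · simp only [copSeq, hseq] at h
    have := hmove (st t).2 (st t).1 i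
    rw [h] at this
    exact hC i ⟨(st t).1, Or.inr hu.symm, Near.symm this⟩

theorem copsWin_mono {V : Type*} [Nonempty V] (G : SimpleGraph V) {m m' : ℕ} (h : m ≤ m')
    (hw : CopsWinWith G m) : CopsWinWith G m' := by
  obtain ⟨init, move, hmove, hwin⟩ := hw
  let start : Fin m' → V := fun i =>
    if hi : i.1 < m then init ⟨i.1, hi⟩ else Classical.arbitrary V
  let move' : (Fin m' → V) → V → Fin m' → V := fun c r i =>
    if hi : i.1 < m then move (fun a => c (Fin.castLE h a)) r ⟨i.1, hi⟩ else c i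
  have hseq : ∀ r t a, copSeq start move' r t (Fin.castLE h a) = copSeq init move r t a := by
    intro r t
    induction t with
    | zero => intro a; simp [copSeq, start]
    | succ t ih => intro a; simp [copSeq, move', ih]
  refine ⟨start, move', ?_, ?_⟩
  · intro c r i
    by_cases hi : i.1 < m
    · simpa [move', hi] using hmove (fun a => c (Fin.castLE h a)) r ⟨i.1, hi⟩
    · simp [move', hi]
  · intro r hr
    obtain ⟨t, a, ha⟩ := hwin r hr
    exact ⟨t, Fin.castLE h a, by rwa [hseq, hseq]⟩

theorem copsWin_card {V : Type*} [Fintype V] (G : SimpleGraph V) :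
    CopsWinWith G (Fintype.card V) := by
  refine ⟨(Fintype.equivFin V).symm, fun c _ => c, fun _ _ _ => Or.inl rfl, fun r _ => ?_⟩
  exact ⟨0, Fintype.equivFin V (r 0), Or.inl (by simp [copSeq])⟩

theorem start_GP (n k : ℕ) (hn : 10 ≤ n) (C : Fin 3 → GPVertex n) :
    ∃ r w, (GP n k).Adj r w ∧ ∀ j, ¬ Near (GP n k) w (C j) := by
  classical
  have : NeZero n := ⟨by omega⟩
  let x : GPVertex n → ZMod n := Sum.elim id id
  let S : Finset (ZMod n) := Finset.univ.biUnion fun j : Fin 3 =>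
    {x (C j), x (C j) + 1, x (C j) - 1}
  have hS : S.card ≤ 9 := by
    refine (Finset.card_biUnion_le_card_mul _ _ 3 fun j _ => Finset.card_le_three).trans ?_
    simp
  obtain ⟨z, hz⟩ : ∃ z, z ∉ S := by
    by_contra hno
    push Not at hno
    have : S = Finset.univ := Finset.eq_univ_iff_forall.2 hno
    rw [this, Finset.card_univ, ZMod.card] at hS
    omega
  refine ⟨Sum.inr z, Sum.inl z, by simp [GP, GPRel], fun j hj => hz ?_⟩
  simp only [S, Finset.mem_biUnion, Finset.mem_univ, true_and]
  refine ⟨j, ?_⟩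
  simp only [Finset.mem_insert, Finset.mem_singleton]
  rcases hcj : C j with c | c <;> rw [hcj] at hj <;>
    simp [Near, GP, GPRel] at hj <;> simp only [x, Sum.elim_inl, Sum.elim_inr, id]
  · rcases hj with hj | ⟨-, hj | hj⟩
    · left; exact hj.symm
    · right; right; rw [hj]; ring
    · right; left; exact hj
  · left; exact hj.symm

/-- Three cops do not have a winning strategy on `GP(n,k)`; that is, the cop number
of `GP(n,k)` is strictly greater than `3`. -/
theorem not_copsWinWith_three_GP (n k : ℕ)
    (hn : 0 < n) (hk : 0 < k)
    (hi : ∃ i, i ∈ ({1, 2, 3} : Set ℕ) ∧ i * n = 7 * k)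
    (h2k : 2 * k < n)
    (hbig : 42 ≤ n ∨ (n = 28 ∧ k = 8) ∨ (n = 35 ∧ k = 10) ∨ (n = 35 ∧ k = 15)) :
    ¬ CopsWinWith (GP n k) 3 ∧ 3 < copNumber (GP n k) := by
  obtain ⟨i, hi, hin⟩ := hi
  simp only [Set.mem_insert_iff, Set.mem_singleton_iff] at hi
  obtain ⟨m, rfl⟩ : ∃ m, n = 7 * m := ⟨n / 7, by rcases hi with rfl | rfl | rfl <;> omega⟩
  obtain rfl : k = i * m := by rcases hi with rfl | rfl | rfl <;> omega
  have hg : GoodParam m i := by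
    refine ⟨hi, ?_⟩
    rcases hi with rfl | rfl | rfl <;> omega
  have hn10 : 10 ≤ 7 * m := by omega
  have h7 : (7 : ZMod (7 * m)) * (i * m : ℕ) = 0 := by
    have h : ((7 * (i * m) : ℕ) : ZMod (7 * m)) = 0 :=
      (ZMod.natCast_eq_zero_iff _ _).2 ⟨i, by ring⟩
    simpa using h
  have h1 : (1 : ZMod (7 * m)) ≠ 0 := by
    have : Fact (1 < 7 * m) := ⟨by omega⟩
    exact one_ne_zero
  have hk0 : ((i * m : ℕ) : ZMod (7 * m)) ≠ 0 := by
    intro h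
    have := Nat.le_of_dvd hk ((ZMod.natCast_eq_zero_iff _ _).1 h)
    omega
  have hmain : ¬ CopsWinWith (GP (7 * m) (i * m)) 3 :=
    evade _ (fun r w C => key hg h7 h1 hk0 r w C) (start_GP _ _ hn10)
  refine ⟨hmain, ?_⟩
  by_contra hle
  have : NeZero (7 * m) := ⟨by omega⟩
  have hne : {a | CopsWinWith (GP (7 * m) (i * m)) a}.Nonempty := ⟨_, copsWin_card _⟩
  exact hmain (copsWin_mono _ (not_lt.1 hle) (Nat.sInf_mem hne))
end

section
/- Let n and k be positive integers with i·n = 7k for some i ∈ {1,2,3} and 2k < n, and suppose that either n ≥ 42 or (n,k) ∈ {(28,8),(35,10),(35,15)}. Let G = GP(n,k), let c_1, c_2, c_3 be vertices of G (the positions of three cops) and let r be a vertex of G not equal to any c_j (the robber's position). Suppose that for every neighbour v of r, at least one of the following holds: (a) some cop c_j satisfies dist(r, c_j) ≤ 2 and c_j lies in a branch of v; or (b) for every neighbour u of v with u ≠ r, some cop c_j lies in the branch of v through u. Then the configuration (c_1,c_2,c_3; r) is trapped. -/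
open SimpleGraph

/-- `c` lies in a branch of `v` (relative to the robber position `r`). -/
def inBranchOf {V : Type*} (G : SimpleGraph V) (r v c : V) : Prop :=
  ∃ u, G.Adj v u ∧ u ≠ r ∧ c ∈ branch G r v u

/-! ### A local integer model of `GP(n,k)` around a vertex -/

/-- Model points: `(isOuter, x, y)` stands for the vertex at offset `x + y * k`. -/
abbrev GPPt := Bool × ℤ × ℤ

/-- The three neighbours of a model point: forward, backward, spoke. -/
def gpNb (p : GPPt) (j : Fin 3) : GPPt :=
  match p, j with
  | (true, x, y), 0 => (true, x + 1, y)
  | (true, x, y), 1 => (true, x - 1, y)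
  | (true, x, y), 2 => (false, x, y)
  | (false, x, y), 0 => (false, x, y + 1)
  | (false, x, y), 1 => (false, x, y - 1)
  | (false, x, y), 2 => (true, x, y)

/-- The vertex represented by a model point, relative to the base index `s`. -/
def gpEv (n k : ℕ) (s : ZMod n) (p : GPPt) : GPVertex n :=
  match p with
  | (true, x, y) => Sum.inl (s + (x : ZMod n) + (y : ZMod n) * (k : ZMod n))
  | (false, x, y) => Sum.inr (s + (x : ZMod n) + (y : ZMod n) * (k : ZMod n))

/-- Consecutive moves do not backtrack. -/
def gpOk (j l : Fin 3) : Bool := (j.val + l.val != 1) && (j.val + l.val != 4)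

def gpChain : List (Fin 3) → Bool
  | [] => true
  | [_] => true
  | a :: b :: t => gpOk a b && gpChain (b :: t)

def gpEnd (t : Bool) (l : List (Fin 3)) : GPPt := l.foldl gpNb (t, 0, 0)

/-- Offsets which are small enough for the arithmetic lemma. -/
def gpSmall (x y : ℤ) : Bool :=
  decide (x.natAbs ≤ 8) && (decide (x = 0) || decide (y = 0) || decide (x.natAbs + y.natAbs ≤ 6))

/-- The allowed coincidences of two branches. -/
def gpConcl (j l j' l' : Fin 3) (far : Bool) : Bool :=
  (decide (j = j') && decide (l = l')) ||
    (far && decide (j ≠ j') && (decide (j = 2) || decide (j' = 2)) &&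
      decide (j ≠ l) && decide (j' ≠ l'))

def gpCheck (p q : GPPt) (C : Bool) : Bool :=
  (p.1 != q.1) || (gpSmall (p.2.1 - q.2.1) (p.2.2 - q.2.2) &&
    (C || decide (¬ (p.2.1 - q.2.1 = 0)) || decide (¬ ((p.2.2 - q.2.2) % 7 = 0))))

theorem gp_dec0 : ∀ t : Bool, ∀ j l : Fin 3, gpChain [j, l] = true →
    ∀ j' l' : Fin 3, gpChain [j', l'] = true →
    gpCheck (gpEnd t [j, l]) (gpEnd t [j', l']) (gpConcl j l j' l' false) = true := by
  decide +kernel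

theorem gp_dec1 : ∀ t : Bool, ∀ j l a : Fin 3, gpChain [j, l, a] = true →
    ∀ j' l' a' : Fin 3, gpChain [j', l', a'] = true →
    gpCheck (gpEnd t [j, l, a]) (gpEnd t [j', l', a']) (gpConcl j l j' l' true) = true := by
  decide +kernel

theorem gp_dec2 : ∀ t : Bool, ∀ j l a b : Fin 3, gpChain [j, l, a, b] = true →
    ∀ j' l' a' b' : Fin 3, gpChain [j', l', a', b'] = true →
    gpCheck (gpEnd t [j, l, a, b]) (gpEnd t [j', l', a', b'])
      (gpConcl j l j' l' true) = true := by
  decide +kernel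

theorem gp_dec_back : ∀ t : Bool, ∀ j l : Fin 3, gpOk j l = true →
    gpCheck (gpEnd t [j, l]) (gpEnd t []) false = true := by
  decide +kernel

theorem gp_arith (n k : ℕ) (hn : 0 < n)
    (hi : ∃ i, i ∈ ({1, 2, 3} : Set ℕ) ∧ i * n = 7 * k)
    (hbig : 42 ≤ n ∨ (n = 28 ∧ k = 8) ∨ (n = 35 ∧ k = 10) ∨ (n = 35 ∧ k = 15))
    (x y : ℤ) (hs : gpSmall x y = true)
    (h : (x : ZMod n) + (y : ZMod n) * (k : ZMod n) = 0) : x = 0 ∧ y % 7 = 0 := by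
  have h1 : ((x + y * (k : ℤ) : ℤ) : ZMod n) = 0 := by push_cast; exact h
  rw [ZMod.intCast_zmod_eq_zero_iff_dvd] at h1
  obtain ⟨t, ht⟩ := h1
  simp only [gpSmall, Bool.and_eq_true, Bool.or_eq_true, decide_eq_true_eq] at hs
  obtain ⟨hx8, hs⟩ := hs
  obtain ⟨i, hi3, hik⟩ := hi
  have hi3 : i = 1 ∨ i = 2 ∨ i = 3 := by simpa using hi3
  obtain ⟨m, rfl⟩ : ∃ m, n = 7 * m := by
    have : 7 ∣ n := by rcases hi3 with rfl | rfl | rfl <;> omega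
    exact this
  obtain rfl : k = i * m := by nlinarith
  push_cast at ht
  have hxz : x = m * (7 * t - y * i) := by linarith
  have hm4 : 4 ≤ m := by omega
  have hx0 : x = 0 := by
    rcases hs with (hs | hs) | hs
    · exact hs
    · subst hs
      by_contra hne
      have ht0 : t ≠ 0 := by rintro rfl; apply hne; rw [hxz]; ring
      have : x.natAbs = 7 * m * t.natAbs := by
        rw [hxz, show (m : ℤ) * (7 * t - 0 * i) = ((7 * m : ℕ) : ℤ) * t by push_cast; ring,
          Int.natAbs_mul, Int.natAbs_natCast]
      have : 1 ≤ t.natAbs := by omega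
      nlinarith
    · by_contra hne
      have hz : 7 * t - y * i ≠ 0 := by intro h0; apply hne; rw [hxz, h0]; ring
      have hab : x.natAbs = m * (7 * t - y * i).natAbs := by
        rw [hxz, Int.natAbs_mul, Int.natAbs_natCast]
      have h1z : 1 ≤ (7 * t - y * i).natAbs := by omega
      have hmx : m ≤ x.natAbs := by nlinarith
      have hy0 : y ≠ 0 := by
        rintro rfl
        have : x.natAbs = 7 * m * t.natAbs := by
          rw [hxz, show (m : ℤ) * (7 * t - 0 * i) = ((7 * m : ℕ) : ℤ) * t by push_cast; ring,
            Int.natAbs_mul, Int.natAbs_natCast]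
        have : 1 ≤ t.natAbs := by
          by_contra hc
          have : t = 0 := by omega
          subst this; simp at hz
        nlinarith
      have hc : (m = 4 ∧ i = 2) ∨ (m = 5 ∧ i = 2) ∨ (m = 5 ∧ i = 3) := by
        have : m ≤ 5 := by omega
        rcases hi3 with rfl | rfl | rfl <;> omega
      have hz1 : 7 * t - y * i = 1 ∨ 7 * t - y * i = -1 := by
        have : (7 * t - y * i).natAbs ≤ 1 := by
          by_contra hcon
          have : 2 ≤ (7 * t - y * i).natAbs := by omega
          have : m * 2 ≤ x.natAbs := by rw [hab]; exact Nat.mul_le_mul_left m this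
          omega
        omega
      rcases hc with ⟨rfl, rfl⟩ | ⟨rfl, rfl⟩ | ⟨rfl, rfl⟩ <;> rcases hz1 with hz1 | hz1 <;>
        rw [hz1] at hxz <;> push_cast at hxz hz1 <;> omega
  refine ⟨hx0, ?_⟩
  rw [hx0] at hxz
  have hz : 7 * t - y * i = 0 := by
    rcases mul_eq_zero.mp hxz.symm with h | h
    · omega
    · exact h
  rcases hi3 with rfl | rfl | rfl <;> push_cast at hz <;> omega

theorem gp_check_use (n k : ℕ) (hn : 0 < n)
    (hi : ∃ i, i ∈ ({1, 2, 3} : Set ℕ) ∧ i * n = 7 * k)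
    (hbig : 42 ≤ n ∨ (n = 28 ∧ k = 8) ∨ (n = 35 ∧ k = 10) ∨ (n = 35 ∧ k = 15))
    (s : ZMod n) (p q : GPPt) (C : Bool) (h : gpCheck p q C = true)
    (he : gpEv n k s p = gpEv n k s q) : C = true := by
  obtain ⟨a, x, y⟩ := p
  obtain ⟨b, x', y'⟩ := q
  have hab : a = b := by
    cases a <;> cases b <;> simp [gpEv] at he ⊢
  subst hab
  have he' : ((x - x' : ℤ) : ZMod n) + ((y - y' : ℤ) : ZMod n) * (k : ZMod n) = 0 := by
    cases a <;> simp only [gpEv, Sum.inl.injEq, Sum.inr.injEq] at he <;>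
      (push_cast; linear_combination he)
  simp only [gpCheck, bne_self_eq_false, Bool.false_or, Bool.and_eq_true, Bool.or_eq_true,
    decide_eq_true_eq] at h
  obtain ⟨h1, h2⟩ := h
  have := gp_arith n k hn hi hbig _ _ h1 he'
  tauto

theorem gp_adj_iff (n k : ℕ) (hn : 0 < n)
    (hi : ∃ i, i ∈ ({1, 2, 3} : Set ℕ) ∧ i * n = 7 * k)
    (hbig : 42 ≤ n ∨ (n = 28 ∧ k = 8) ∨ (n = 35 ∧ k = 10) ∨ (n = 35 ∧ k = 15))
    (s : ZMod n) (p : GPPt) (w : GPVertex n) :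
    (GP n k).Adj (gpEv n k s p) w ↔ ∃ j, w = gpEv n k s (gpNb p j) := by
  have h1 : (1 : ZMod n) ≠ 0 := by
    intro h
    have := gp_arith n k hn hi hbig 1 0 (by decide) (by simpa using h)
    omega
  have hk : (k : ZMod n) ≠ 0 := by
    intro h
    have := gp_arith n k hn hi hbig 0 1 (by decide) (by simpa using h)
    omega
  obtain ⟨a, x, y⟩ := p
  constructor
  · intro h
    rw [GP, SimpleGraph.fromRel_adj] at h
    obtain ⟨-, h⟩ := h
    cases a <;> rcases w with w | w <;> simp only [gpEv, GPRel, or_false, false_or] at h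
    · exact ⟨2, by simp [gpEv, gpNb, h]⟩
    · rcases h with h | h
      · exact ⟨0, by simp only [gpEv, gpNb, h]; push_cast; ring_nf⟩
      · refine ⟨1, ?_⟩
        simp only [gpEv, gpNb, Sum.inr.injEq]; push_cast; linear_combination -h
    · rcases h with h | h
      · exact ⟨0, by simp only [gpEv, gpNb, h]; push_cast; ring_nf⟩
      · refine ⟨1, ?_⟩
        simp only [gpEv, gpNb, Sum.inl.injEq]; push_cast; linear_combination -h
    · exact ⟨2, by simp [gpEv, gpNb, h]⟩
  · rintro ⟨j, rfl⟩
    rw [GP, SimpleGraph.fromRel_adj]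
    cases a <;> fin_cases j <;> simp [gpEv, gpNb, GPRel]
    · refine ⟨fun h => hk (by linear_combination -h), Or.inl (by ring)⟩
    · refine ⟨fun h => hk (by linear_combination h), Or.inr (by ring)⟩
    · refine ⟨fun h => h1 (by linear_combination h), Or.inl (by ring)⟩
    · refine ⟨fun h => h1 (by linear_combination h), Or.inr (by ring)⟩

theorem gp_back : ∀ (p : GPPt) (j l : Fin 3), gpOk j l = false → gpNb (gpNb p j) l = p := by
  rintro ⟨a, x, y⟩ j l h
  cases a <;> fin_cases j <;> fin_cases l <;> simp [gpOk, gpNb] at h ⊢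

/-- Cop position `c` lies in the branch with first moves `j, l`, at distance `rest + 2`. -/
def gpB (n k : ℕ) (s : ZMod n) (t : Bool) (d : ℕ) (c : GPVertex n) (j l : Fin 3) : Prop :=
  ∃ rest : List (Fin 3), rest.length + 2 = d ∧ rest.length ≤ 2 ∧
    gpChain (j :: l :: rest) = true ∧ c = gpEv n k s (gpEnd t (j :: l :: rest))

theorem gpB_fact (n k : ℕ) (hn : 0 < n)
    (hi : ∃ i, i ∈ ({1, 2, 3} : Set ℕ) ∧ i * n = 7 * k)
    (hbig : 42 ≤ n ∨ (n = 28 ∧ k = 8) ∨ (n = 35 ∧ k = 10) ∨ (n = 35 ∧ k = 15))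
    (s : ZMod n) (t : Bool) (d : ℕ) (c : GPVertex n) (j l j' l' : Fin 3)
    (h : gpB n k s t d c j l) (h' : gpB n k s t d c j' l') :
    gpConcl j l j' l' (decide (2 < d)) = true := by
  obtain ⟨r, hr, hr2, hc, he⟩ := h
  obtain ⟨r', hr', -, hc', he'⟩ := h'
  have he := he.symm.trans he'
  rcases r with _ | ⟨a, _ | ⟨b, _ | ⟨e, r⟩⟩⟩
  · obtain rfl : r' = [] := by
      apply List.eq_nil_of_length_eq_zero; simp at hr; omega
    have := gp_check_use n k hn hi hbig s _ _ _ (gp_dec0 t j l hc j' l' hc') he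
    simp at hr; subst hr; exact this
  · obtain ⟨a', rfl⟩ : ∃ a', r' = [a'] := by
      apply List.length_eq_one_iff.mp; simp at hr; omega
    have := gp_check_use n k hn hi hbig s _ _ _ (gp_dec1 t j l a hc j' l' a' hc') he
    simp at hr; subst hr; exact this
  · obtain ⟨a', b', rfl⟩ : ∃ a' b', r' = [a', b'] := by
      apply List.length_eq_two.mp; simp at hr; omega
    have := gp_check_use n k hn hi hbig s _ _ _ (gp_dec2 t j l a b hc j' l' a' b' hc') he
    simp at hr; subst hr; exact this
  · simp at hr2

theorem gpB_of_branch (n k : ℕ) (hn : 0 < n)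
    (hi : ∃ i, i ∈ ({1, 2, 3} : Set ℕ) ∧ i * n = 7 * k)
    (hbig : 42 ≤ n ∨ (n = 28 ∧ k = 8) ∨ (n = 35 ∧ k = 10) ∨ (n = 35 ∧ k = 15))
    (s : ZMod n) (t : Bool) (c : GPVertex n) (j l : Fin 3)
    (hc : c ≠ gpEv n k s (gpEnd t [j]))
    (h : c ∈ branch (GP n k) (gpEv n k s (gpEnd t [])) (gpEv n k s (gpEnd t [j]))
      (gpEv n k s (gpEnd t [j, l]))) :
    gpB n k s t ((GP n k).dist (gpEv n k s (gpEnd t [])) c) c j l := by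
  rcases h with h | ⟨hd, p, hp, hpre⟩
  · exact absurd h hc
  have hpath : p.IsPath := SimpleGraph.Walk.isPath_of_length_eq_dist p hp
  have hnd := hpath.support_nodup
  rw [← hp] at hd ⊢
  clear hp hpath
  have key : ∀ L : List (Fin 3), ∀ a b : Fin 3,
      gpEv n k s (gpEnd t L) ≠ gpEv n k s (gpEnd t (L ++ [a, b])) → gpOk a b = true := by
    intro L a b hne
    by_contra hcon
    apply hne
    have := gp_back (gpEnd t L) a b (by simpa using hcon)
    simp only [gpEnd, List.foldl_append, List.foldl_cons, List.foldl_nil] at this ⊢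
    rw [this]
  have step : ∀ (L : List (Fin 3)) (w : GPVertex n), (GP n k).Adj (gpEv n k s (gpEnd t L)) w →
      ∃ a, w = gpEv n k s (gpEnd t (L ++ [a])) := by
    intro L w hw
    obtain ⟨a, ha⟩ := (gp_adj_iff n k hn hi hbig s _ _).mp hw
    exact ⟨a, by simpa [gpEnd] using ha⟩
  generalize hR : gpEv n k s (gpEnd t []) = R at *
  generalize hV : gpEv n k s (gpEnd t [j]) = V at *
  generalize hU : gpEv n k s (gpEnd t [j, l]) = U at *
  cases p with
  | nil => simp at hpre
  | cons h1 p =>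
    cases p with
    | nil => simp at hpre
    | cons h2 p =>
      simp only [SimpleGraph.Walk.support_cons, List.cons_prefix_cons, true_and] at hpre
      obtain ⟨rfl, hpre⟩ := hpre
      cases p with
      | nil =>
        simp at hpre hnd
        refine ⟨[], by simp, by simp, ?_, ?_⟩
        · have := key [] j l (by rw [hR]; simp [hU, hpre]; tauto)
          simp [gpChain, this]
        · rw [hU]; exact hpre.symm
      | cons h3 p =>
        simp at hpre
        subst hpre
        subst hU
        obtain ⟨a, rfl⟩ := step _ _ h3
        cases p with
        | nil =>
          simp at hnd
          refine ⟨[a], by simp, by simp, ?_, by simp⟩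
          have e1 := key [] j l (by rw [hR]; simp; tauto)
          have e2 := key [j] l a (by rw [hV]; simp; tauto)
          simp [gpChain, e1, e2]
        | cons h4 p =>
          obtain ⟨b, rfl⟩ := step _ _ h4
          cases p with
          | nil =>
            simp at hnd
            refine ⟨[a, b], by simp, by simp, ?_, by simp⟩
            have e1 := key [] j l (by rw [hR]; simp; tauto)
            have e2 := key [j] l a (by rw [hV]; simp; tauto)
            have e3 := key [j, l] a b (by simp; tauto)
            simp [gpChain, e1, e2, e3]
          | cons h5 p => simp at hd; omega

theorem gp_comb (A : Fin 3 → Fin 3 → Prop) (B : Fin 3 → Fin 3 → Fin 3 → Prop)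
    (hA : ∀ i j, A i j → ∃ l, B i j l)
    (hF : ∀ i j l j' l', B i j l → B i j' l' → gpConcl j l j' l' true = true)
    (hA4 : ∀ i j j' l', A i j → B i j' l' → j = j')
    (hH : ∀ j, (∃ i, A i j) ∨ ∀ l, gpOk j l = true → ∃ i, B i j l) :
    ∀ j, ∃ i, A i j := by
  have hA5 : ∀ i j j', A i j → A i j' → j = j' := fun i j j' h h' => by
    obtain ⟨l, hl⟩ := hA i j' h'
    exact hA4 i j j' l h hl
  have hF1 : ∀ i j l l', B i j l → B i j l' → l = l' := by
    intro i j l l' h h'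
    have := hF i j l j l' h h'
    simpa [gpConcl] using this
  have hF2 : ∀ i j j' l', B i j j → B i j' l' → j = j' := by
    intro i j j' l' h h'
    have := hF i j j j' l' h h'
    simp [gpConcl] at this
    tauto
  have hF3 : ∀ i j j' l l', j ≠ 2 → j' ≠ 2 → B i j l → B i j' l' → j = j' := by
    intro i j j' l l' h2 h2' h h'
    have := hF i j l j' l' h h'
    simp [gpConcl] at this
    tauto
  have ok1 : ∀ j : Fin 3, j ≠ 2 → gpOk j j = true := by decide
  have ok2 : ∀ j : Fin 3, j ≠ 2 → gpOk j 2 = true := by decide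
  have pig : ∀ a b c i : Fin 3, a ≠ b → a ≠ c → b ≠ c → i = a ∨ i = b ∨ i = c := by decide
  -- the two outer neighbours have close cops
  have main : ∀ j j' : Fin 3, j ≠ 2 → j' ≠ 2 → j ≠ j' → ∃ i, A i j := by
    intro j j' hj hj' hjj
    rcases hH j with h | h
    · exact h
    exfalso
    obtain ⟨c, hc⟩ := h j (ok1 _ hj)
    obtain ⟨c', hc'⟩ := h 2 (ok2 _ hj)
    have hcc : c ≠ c' := by rintro rfl; exact hj (hF1 _ _ _ _ hc hc')
    rcases hH j' with ⟨d, hd⟩ | h'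
    · obtain ⟨l, hl⟩ := hA _ _ hd
      have hcd : c ≠ d := by rintro rfl; exact hjj (hF2 _ _ _ _ hc hl)
      have hcd' : c' ≠ d := by rintro rfl; exact hjj (hF3 _ _ _ _ _ hj hj' hc' hl)
      have only : ∀ i l, B i 2 l → i = c' := by
        intro i l hi
        rcases pig c c' d i hcc hcd hcd' with rfl | rfl | rfl
        · exact absurd (hF2 _ _ _ _ hc hi) hj
        · rfl
        · exact absurd (hA4 _ _ _ _ hd hi) hj'
      rcases hH 2 with ⟨e, he⟩ | h2
      · obtain ⟨l2, hl2⟩ := hA _ _ he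
        obtain rfl := only _ _ hl2
        exact hj (hA4 _ _ _ _ he hc').symm
      · obtain ⟨e, he⟩ := h2 0 (by decide)
        obtain ⟨f, hf⟩ := h2 1 (by decide)
        obtain rfl := only _ _ he
        obtain rfl := only _ _ hf
        exact absurd (hF1 _ _ _ _ he hf) (by decide)
    · obtain ⟨d, hd⟩ := h' j' (ok1 _ hj')
      obtain ⟨d', hd'⟩ := h' 2 (ok2 _ hj')
      have hcd : c ≠ d := by rintro rfl; exact hjj (hF2 _ _ _ _ hc hd)
      have hcd' : c' ≠ d := by rintro rfl; exact hjj (hF3 _ _ _ _ _ hj hj' hc' hd)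
      rcases pig c c' d d' hcc hcd hcd' with rfl | rfl | rfl
      · exact hjj (hF2 _ _ _ _ hc hd')
      · exact hjj (hF3 _ _ _ _ _ hj hj' hc' hd')
      · exact hj' (hF1 _ _ _ _ hd hd')
  have m0 := main 0 1 (by decide) (by decide) (by decide)
  have m1 := main 1 0 (by decide) (by decide) (by decide)
  have m2 : ∃ i, A i 2 := by
    rcases hH 2 with h | h
    · exact h
    exfalso
    obtain ⟨c, hc⟩ := m0
    obtain ⟨d, hd⟩ := m1
    obtain ⟨e, he⟩ := h 0 (by decide)
    obtain ⟨f, hf⟩ := h 1 (by decide)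
    have h1 : c ≠ d := by rintro rfl; exact absurd (hA5 _ _ _ hc hd) (by decide)
    have h2 : c ≠ e := by rintro rfl; exact absurd (hA4 _ _ _ _ hc he) (by decide)
    have h3 : d ≠ e := by rintro rfl; exact absurd (hA4 _ _ _ _ hd he) (by decide)
    rcases pig c d e f h1 h2 h3 with rfl | rfl | rfl
    · exact absurd (hA4 _ _ _ _ hc hf) (by decide)
    · exact absurd (hA4 _ _ _ _ hd hf) (by decide)
    · exact absurd (hF1 _ _ _ _ he hf) (by decide)
  intro j
  fin_cases j
  · exact m0
  · exact m1
  · exact m2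

/-- If every neighbour `v` of the robber either has a cop at distance at most `2`
from the robber lying in one of its branches, or has a cop on each of its branches,
then the robber is trapped. -/
theorem trapped_of_branches_covered_GP (n k : ℕ)
    (hn : 0 < n) (hk : 0 < k)
    (hi : ∃ i, i ∈ ({1, 2, 3} : Set ℕ) ∧ i * n = 7 * k)
    (h2k : 2 * k < n)
    (hbig : 42 ≤ n ∨ (n = 28 ∧ k = 8) ∨ (n = 35 ∧ k = 10) ∨ (n = 35 ∧ k = 15))
    (c₁ c₂ c₃ r : GPVertex n)
    (hr : r ∉ ({c₁, c₂, c₃} : Set (GPVertex n)))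
    (hcov : ∀ v : GPVertex n, (GP n k).Adj r v →
      (((GP n k).dist r c₁ ≤ 2 ∧ inBranchOf (GP n k) r v c₁) ∨
       ((GP n k).dist r c₂ ≤ 2 ∧ inBranchOf (GP n k) r v c₂) ∨
       ((GP n k).dist r c₃ ≤ 2 ∧ inBranchOf (GP n k) r v c₃)) ∨
      (∀ u : GPVertex n, (GP n k).Adj v u → u ≠ r →
        (c₁ ∈ branch (GP n k) r v u ∨ c₂ ∈ branch (GP n k) r v u ∨
         c₃ ∈ branch (GP n k) r v u))) :
    Trapped (GP n k) c₁ c₂ c₃ r := by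
  classical
  obtain ⟨t, s, hrs⟩ : ∃ (t : Bool) (s : ZMod n), r = gpEv n k s (gpEnd t []) := by
    rcases r with s | s
    · exact ⟨true, s, by simp [gpEnd, gpEv]⟩
    · exact ⟨false, s, by simp [gpEnd, gpEv]⟩
  by_cases hadj : (GP n k).Adj c₁ r ∨ (GP n k).Adj c₂ r ∨ (GP n k).Adj c₃ r
  · exact Or.inl hadj
  refine Or.inr ?_
  set c : Fin 3 → GPVertex n := ![c₁, c₂, c₃] with hcdef
  have hex : ∀ P : GPVertex n → Prop, (P c₁ ∨ P c₂ ∨ P c₃) ↔ ∃ i, P (c i) := by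
    intro P
    simp [hcdef, Fin.exists_fin_succ]
  have hstep : ∀ (L : List (Fin 3)) (w : GPVertex n),
      (GP n k).Adj (gpEv n k s (gpEnd t L)) w ↔ ∃ a, w = gpEv n k s (gpEnd t (L ++ [a])) := by
    intro L w
    rw [gp_adj_iff n k hn hi hbig s]
    simp [gpEnd]
  have hnot : ∀ i j, c i ≠ gpEv n k s (gpEnd t [j]) := by
    intro i j h
    apply hadj
    apply (hex (fun x => (GP n k).Adj x r)).mpr
    refine ⟨i, SimpleGraph.Adj.symm ?_⟩
    rw [hrs, hstep]
    exact ⟨j, h⟩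
  let B : Fin 3 → Fin 3 → Fin 3 → Prop := fun i j l => gpB n k s t ((GP n k).dist r (c i)) (c i) j l
  let A : Fin 3 → Fin 3 → Prop := fun i j => (GP n k).dist r (c i) ≤ 2 ∧ ∃ l, B i j l
  have hbr : ∀ i j l, c i ∈ branch (GP n k) r (gpEv n k s (gpEnd t [j]))
      (gpEv n k s (gpEnd t [j, l])) → B i j l := by
    intro i j l h
    simp only [B]
    rw [hrs] at h ⊢
    exact gpB_of_branch n k hn hi hbig s t (c i) j l (hnot i j) h
  have hall := gp_comb A B (fun i j h => h.2)
    (fun i j l j' l' h h' => by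
      have := gpB_fact n k hn hi hbig s t _ _ j l j' l' h h'
      simp [gpConcl] at this ⊢
      tauto)
    (fun i j j' l' h h' => by
      obtain ⟨hd, l, hl⟩ := h
      have := gpB_fact n k hn hi hbig s t _ _ j l j' l' hl h'
      simp [gpConcl] at this
      rcases this with h | h
      · exact h.1
      · omega)
    (fun j => by
      rcases hcov (gpEv n k s (gpEnd t [j])) (by rw [hrs, hstep]; exact ⟨j, rfl⟩) with h | h
      · left
        obtain ⟨i, hd, u, hu, -, hb⟩ := (hex (fun x => (GP n k).dist r x ≤ 2 ∧
          inBranchOf (GP n k) r (gpEv n k s (gpEnd t [j])) x)).mp h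
        obtain ⟨l, rfl⟩ := (hstep _ _).mp hu
        exact ⟨i, hd, l, hbr i j l hb⟩
      · right
        intro l hl
        have hne : gpEv n k s (gpEnd t [j, l]) ≠ r := by
          intro h
          rw [hrs] at h
          exact absurd (gp_check_use n k hn hi hbig s _ _ _ (gp_dec_back t j l hl) h) (by decide)
        obtain ⟨i, hb⟩ := (hex (fun x => x ∈ branch (GP n k) r (gpEv n k s (gpEnd t [j]))
          (gpEv n k s (gpEnd t [j, l])))).mp
            (h _ ((hstep _ _).mpr ⟨l, rfl⟩) hne)
        exact ⟨i, hbr i j l hb⟩)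
  intro v hv
  rw [hrs, hstep] at hv
  obtain ⟨j, rfl⟩ := hv
  apply (hex (fun x => x ∈ closedNbhd (GP n k) _)).mpr
  obtain ⟨i, hd, l, rest, hr1, -, -, he⟩ := hall j
  refine ⟨i, Or.inr ?_⟩
  obtain rfl : rest = [] := List.eq_nil_of_length_eq_zero (by omega)
  show (GP n k).Adj _ _
  rw [hstep]
  exact ⟨l, he⟩
end

section
/- Let n and k be positive integers with i·n = 7k for some i ∈ {1,2,3} and 2k < n, and suppose that either n ≥ 42 or (n,k) ∈ {(28,8),(35,10),(35,15)}. Let r be a vertex of GP(n,k) and let v, v' be two distinct neighbours of r. Then there do not exist vertices c_1, c_2 with c_1, c_2 ∉ {v, v'} such that each of the two branches of v and each of the two branches of v' contains c_1 or c_2. -/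
open SimpleGraph

/-- Model vertices: side (`false` outer, `true` inner), and coordinates `x`, `y` standing for
the index `x + y k`. -/
abbrev MV := Bool × ℤ × ℤ

def mnb : MV → List MV
  | (false, x, y) => [(false, x + 1, y), (false, x - 1, y), (true, x, y)]
  | (true, x, y) => [(true, x, y + 1), (true, x, y - 1), (false, x, y)]

def msph : ℕ → MV → List MV
  | 0, p => [p]
  | L + 1, p => (mnb p).flatMap (msph L)

/-- Syntactic sufficient condition for equality of images. -/
def meq (p q : MV) : Bool :=
  p.1 == q.1 && p.2.1 == q.2.1 && (p.2.2 - q.2.2) % 7 == 0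

def mends (p0 u : MV) : List MV :=
  [0, 1, 2].flatMap fun L => (msph L u).filter fun p =>
    !((List.range (L + 2)).any fun M => (msph M p0).any fun q => meq p q)

def mcoll (E : ℤ → ℤ → Bool) (p q : MV) : Bool :=
  p.1 == q.1 && E (p.2.1 - q.2.1) (p.2.2 - q.2.2)

def mdisj (E : ℤ → ℤ → Bool) (A B : List MV) : Bool :=
  A.all fun p => B.all fun q => !mcoll E p q

def mbr (E : ℤ → ℤ → Bool) (p0 v : MV) : List (MV × MV) :=
  ((mnb v).filter fun u => !mcoll E u p0).map fun u => (v, u)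

def mcheck (E : ℤ → ℤ → Bool) : Bool :=
  [false, true].all fun s =>
    let p0 : MV := (s, 0, 0)
    (mnb p0).all fun v => (mnb p0).all fun w => v == w ||
      let bs := mbr E p0 v ++ mbr E p0 w
      bs.any fun a => bs.any fun b =>
        mdisj E (mends p0 a.2) (mends p0 b.2) && bs.any fun c =>
          mdisj E (mends p0 a.2) (mends p0 c.2) && mdisj E (mends p0 b.2) (mends p0 c.2)

def Egen (dx dy : ℤ) : Bool :=
  if dx = 0 then dy % 7 == 0
  else if (-5 ≤ dx ∧ dx ≤ 5) ∨ (dy % 7 = 0 ∧ -41 ≤ dx ∧ dx ≤ 41) then false else true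

def Espec (n k : ℕ) (dx dy : ℤ) : Bool := (dx + dy * k) % n == 0

theorem mcheck_gen : mcheck Egen = true := by decide +kernel
theorem mcheck_28 : mcheck (Espec 28 8) = true := by decide +kernel
theorem mcheck_35 : mcheck (Espec 35 10) = true := by decide +kernel
theorem mcheck_35' : mcheck (Espec 35 15) = true := by decide +kernel

def phi (n k : ℕ) (j : ZMod n) : MV → GPVertex n
  | (false, x, y) => Sum.inl (j + x + y * k)
  | (true, x, y) => Sum.inr (j + x + y * k)

theorem phi_adj {n k : ℕ} (j : ZMod n) (p : MV) (w : GPVertex n)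
    (h : (GP n k).Adj (phi n k j p) w) : ∃ q ∈ mnb p, phi n k j q = w := by
  obtain ⟨s, x, y⟩ := p
  unfold GP at h
  rw [SimpleGraph.fromRel_adj] at h
  obtain ⟨-, h⟩ := h
  cases s <;> rcases w with w | w <;> simp only [phi, GPRel, or_false, false_or] at h <;>
    simp only [mnb, List.mem_cons, List.not_mem_nil, or_false, exists_eq_or_imp, exists_eq_left,
      phi, Sum.inl.injEq, Sum.inr.injEq, reduceCtorEq, false_or, or_false] <;> push_cast
  · rcases h with h | h
    · left; rw [h]; ring
    · right; linear_combination h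
  · exact h.symm
  · exact h
  · rcases h with h | h
    · left; rw [h]; ring
    · right; linear_combination h

theorem adj_phi {n k : ℕ} (h1 : (1 : ZMod n) ≠ 0) (hk : (k : ZMod n) ≠ 0) (j : ZMod n) (p q : MV)
    (h : q ∈ mnb p) : (GP n k).Adj (phi n k j p) (phi n k j q) := by
  obtain ⟨s, x, y⟩ := p
  unfold GP
  rw [SimpleGraph.fromRel_adj]
  cases s <;> simp only [mnb, List.mem_cons, List.not_mem_nil, or_false] at h <;>
    rcases h with rfl | rfl | rfl <;> simp only [phi, GPRel, ne_eq, Sum.inl.injEq, Sum.inr.injEq,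
      reduceCtorEq, not_false_eq_true, or_true, true_or, and_self] <;> push_cast <;>
    refine ⟨fun h => ?_, ?_⟩
  · exact h1 (by linear_combination -h)
  · left; ring
  · exact h1 (by linear_combination h)
  · right; ring
  · exact hk (by linear_combination -h)
  · left; ring
  · exact hk (by linear_combination h)
  · right; ring

theorem walk_phi {n k : ℕ} (j : ZMod n) (w : GPVertex n) : ∀ (L : ℕ) (p : MV)
    (W : (GP n k).Walk (phi n k j p) w), W.length = L → ∃ q ∈ msph L p, phi n k j q = w := by
  intro L
  induction L with
  | zero =>
    intro p W h
    exact ⟨p, by simp [msph], SimpleGraph.Walk.eq_of_length_eq_zero h⟩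
  | succ L ih =>
    intro p W h
    cases W with
    | nil => simp at h
    | cons ha W' =>
      obtain ⟨q, hq, rfl⟩ := phi_adj j p _ ha
      obtain ⟨t, ht, e⟩ := ih q W' (by simpa using h)
      exact ⟨t, by simp only [msph, List.mem_flatMap]; exact ⟨q, hq, ht⟩, e⟩

theorem phi_walk {n k : ℕ} (h1 : (1 : ZMod n) ≠ 0) (hk : (k : ZMod n) ≠ 0) (j : ZMod n) :
    ∀ (L : ℕ) (p q : MV), q ∈ msph L p →
      ∃ W : (GP n k).Walk (phi n k j p) (phi n k j q), W.length = L := by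
  intro L
  induction L with
  | zero =>
    intro p q h
    simp only [msph, List.mem_singleton] at h
    subst h
    exact ⟨SimpleGraph.Walk.nil, rfl⟩
  | succ L ih =>
    intro p q h
    simp only [msph, List.mem_flatMap] at h
    obtain ⟨t, ht, h⟩ := h
    obtain ⟨W, hW⟩ := ih t q h
    exact ⟨SimpleGraph.Walk.cons (adj_phi h1 hk j p t ht) W, by simp [hW]⟩

theorem meq_phi {n k : ℕ} (h7 : (7 : ZMod n) * k = 0) (j : ZMod n) (p q : MV)
    (h : meq p q = true) : phi n k j p = phi n k j q := by
  obtain ⟨s, x, y⟩ := p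
  obtain ⟨s', x', y'⟩ := q
  simp only [meq, Bool.and_eq_true, beq_iff_eq] at h
  obtain ⟨⟨rfl, rfl⟩, h⟩ := h
  obtain ⟨d, hd⟩ := Int.dvd_of_emod_eq_zero h
  have hy : y = y' + 7 * d := by omega
  subst hy
  cases s <;> simp only [phi] <;> congr 1 <;> push_cast <;> linear_combination (d : ZMod n) * h7

theorem phi_coll {n k : ℕ} {E : ℤ → ℤ → Bool}
    (hE : ∀ dx dy : ℤ, (dx : ZMod n) + dy * k = 0 → E dx dy = true) (j : ZMod n) (p q : MV)
    (h : phi n k j p = phi n k j q) : mcoll E p q = true := by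
  obtain ⟨s, x, y⟩ := p
  obtain ⟨s', x', y'⟩ := q
  cases s <;> cases s' <;> simp only [phi, reduceCtorEq, Sum.inl.injEq, Sum.inr.injEq] at h <;>
    simp only [mcoll, beq_self_eq_true, Bool.true_and] <;> apply hE <;> push_cast <;>
    linear_combination h

theorem branch_mends {n k : ℕ} (h1 : (1 : ZMod n) ≠ 0) (hk : (k : ZMod n) ≠ 0)
    (h7 : (7 : ZMod n) * k = 0) (j : ZMod n) (p0 : MV) (v : GPVertex n) (u : MV) (c : GPVertex n)
    (hc : c ≠ v) (h : c ∈ branch (GP n k) (phi n k j p0) v (phi n k j u)) :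
    ∃ q ∈ mends p0 u, phi n k j q = c := by
  rcases h with h | ⟨hd, W, hW, hp⟩
  · exact absurd h hc
  · have key : ∃ W' : (GP n k).Walk (phi n k j u) c, W'.length + 2 = W.length := by
      cases W with
      | nil => simp at hp
      | cons ha W1 =>
        cases W1 with
        | nil => simp at hp
        | cons hb W2 =>
          simp only [SimpleGraph.Walk.support_cons, List.cons_prefix_cons] at hp
          obtain ⟨-, -, hp⟩ := hp
          rw [← SimpleGraph.Walk.cons_tail_support, List.cons_prefix_cons] at hp
          obtain ⟨e, -⟩ := hp
          exact ⟨W2.copy e.symm rfl, by simp⟩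
    obtain ⟨W', hl⟩ := key
    obtain ⟨q, hq, rfl⟩ := walk_phi j c _ u W' rfl
    refine ⟨q, ?_, rfl⟩
    simp only [mends, List.mem_flatMap, List.mem_filter]
    refine ⟨W'.length, ?_, hq, ?_⟩
    · have : W'.length ≤ 2 := by omega
      interval_cases W'.length <;> simp
    · rw [Bool.not_eq_true', Bool.eq_false_iff]
      intro hany
      simp only [List.any_eq_true, List.mem_range] at hany
      obtain ⟨M, hM, t, ht, he⟩ := hany
      obtain ⟨W3, h3⟩ := phi_walk h1 hk j M p0 t ht
      have := SimpleGraph.dist_le W3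
      rw [h3, ← meq_phi h7 j q t he] at this
      omega

theorem mdisj_phi {n k : ℕ} {E : ℤ → ℤ → Bool}
    (hE : ∀ dx dy : ℤ, (dx : ZMod n) + dy * k = 0 → E dx dy = true) (j : ZMod n) (A B : List MV)
    (h : mdisj E A B = true) (c : GPVertex n) (hA : ∃ q ∈ A, phi n k j q = c)
    (hB : ∃ q ∈ B, phi n k j q = c) : False := by
  obtain ⟨p, hp, rfl⟩ := hA
  obtain ⟨q, hq, e⟩ := hB
  simp only [mdisj, List.all_eq_true] at h
  have := h p hp q hq
  rw [phi_coll hE j p q e.symm] at this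
  simp at this

theorem core {n k : ℕ} {E : ℤ → ℤ → Bool} (h1 : (1 : ZMod n) ≠ 0) (hk : (k : ZMod n) ≠ 0)
    (h7 : (7 : ZMod n) * k = 0)
    (hE : ∀ dx dy : ℤ, (dx : ZMod n) + dy * k = 0 → E dx dy = true) (hch : mcheck E = true)
    (r v v' : GPVertex n) (hv : (GP n k).Adj r v) (hv' : (GP n k).Adj r v')
    (hne : v ≠ v') (c₁ c₂ : GPVertex n)
    (hc1 : c₁ ∉ ({v, v'} : Set (GPVertex n))) (hc2 : c₂ ∉ ({v, v'} : Set (GPVertex n)))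
    (hb : ∀ u : GPVertex n, (GP n k).Adj v u → u ≠ r →
          (c₁ ∈ branch (GP n k) r v u ∨ c₂ ∈ branch (GP n k) r v u))
    (hb' : ∀ u : GPVertex n, (GP n k).Adj v' u → u ≠ r →
          (c₁ ∈ branch (GP n k) r v' u ∨ c₂ ∈ branch (GP n k) r v' u)) : False := by
  obtain ⟨j, s, rfl⟩ : ∃ (j : ZMod n) (s : Bool), phi n k j (s, 0, 0) = r := by
    rcases r with j | j
    · exact ⟨j, false, by simp [phi]⟩
    · exact ⟨j, true, by simp [phi]⟩
  obtain ⟨pv, hpv, rfl⟩ := phi_adj j _ _ hv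
  obtain ⟨pw, hpw, rfl⟩ := phi_adj j _ _ hv'
  simp only [Set.mem_insert_iff, Set.mem_singleton_iff, not_or] at hc1 hc2
  simp only [mcheck, List.all_eq_true] at hch
  have hch := hch s (by cases s <;> simp) pv hpv pw hpw
  have hpne : (pv == pw) = false := by
    rw [beq_eq_false_iff_ne]
    rintro rfl
    exact hne rfl
  rw [hpne, Bool.false_or] at hch
  have cov : ∀ a ∈ mbr E (s, 0, 0) pv ++ mbr E (s, 0, 0) pw,
      (∃ q ∈ mends (s, 0, 0) a.2, phi n k j q = c₁) ∨
      (∃ q ∈ mends (s, 0, 0) a.2, phi n k j q = c₂) := by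
    intro a ha
    simp only [mbr, List.mem_append, List.mem_map, List.mem_filter] at ha
    rcases ha with ⟨u, ⟨hu, hnc⟩, rfl⟩ | ⟨u, ⟨hu, hnc⟩, rfl⟩
    · have hur : phi n k j u ≠ phi n k j (s, 0, 0) := by
        intro e
        rw [phi_coll hE j _ _ e] at hnc
        simp at hnc
      exact (hb _ (adj_phi h1 hk j _ _ hu) hur).imp
        (branch_mends h1 hk h7 j _ _ _ _ hc1.1) (branch_mends h1 hk h7 j _ _ _ _ hc2.1)
    · have hur : phi n k j u ≠ phi n k j (s, 0, 0) := by
        intro e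
        rw [phi_coll hE j _ _ e] at hnc
        simp at hnc
      exact (hb' _ (adj_phi h1 hk j _ _ hu) hur).imp
        (branch_mends h1 hk h7 j _ _ _ _ hc1.2) (branch_mends h1 hk h7 j _ _ _ _ hc2.2)
  simp only [List.any_eq_true, Bool.and_eq_true] at hch
  obtain ⟨a, ha, b, hb, hab, c, hc, hac, hbc⟩ := hch
  have ab := mdisj_phi (k := k) hE j _ _ hab
  have ac := mdisj_phi (k := k) hE j _ _ hac
  have bc := mdisj_phi (k := k) hE j _ _ hbc
  rcases cov a ha with xa | xa <;> rcases cov b hb with xb | xb <;>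
    rcases cov c hc with xc | xc <;>
    first
    | exact ab _ xa xb
    | exact ac _ xa xc
    | exact bc _ xb xc

theorem zmod_dvd {n k : ℕ} (dx dy : ℤ) (h : (dx : ZMod n) + dy * k = 0) :
    (n : ℤ) ∣ dx + dy * k := by
  rw [← ZMod.intCast_zmod_eq_zero_iff_dvd]
  push_cast
  exact h

theorem Espec_ok {n k : ℕ} (dx dy : ℤ) (h : (dx : ZMod n) + dy * k = 0) :
    Espec n k dx dy = true := by
  simp only [Espec, beq_iff_eq]
  exact Int.emod_eq_zero_of_dvd (zmod_dvd dx dy h)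

theorem Egen_ok {n k i : ℕ} (hn : 42 ≤ n) (hi : i = 1 ∨ i = 2 ∨ i = 3) (hik : i * n = 7 * k)
    (dx dy : ℤ) (h : (dx : ZMod n) + dy * k = 0) : Egen dx dy = true := by
  obtain ⟨d, hd⟩ := zmod_dvd dx dy h
  obtain ⟨m, rfl⟩ : ∃ m, n = 7 * m := by
    rcases hi with rfl | rfl | rfl
    · exact ⟨k, by omega⟩
    · exact ⟨n / 7, by omega⟩
    · exact ⟨n / 7, by omega⟩
  have hk : k = i * m := by
    have : 7 * k = 7 * (i * m) := by rw [← hik]; ring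
    omega
  subst hk
  push_cast at hd
  have hm : (6 : ℤ) ≤ m := by omega
  -- `dx = m * (7 d - i dy)`
  have hdx : dx = (m : ℤ) * (7 * d - i * dy) := by linear_combination hd
  have small : ∀ (a b t : ℤ), 0 ≤ b → b < a → -b ≤ a * t → a * t ≤ b → t = 0 := by
    intro a b t hb hab h1 h2
    by_contra ht
    rcases lt_or_gt_of_ne ht with ht | ht
    · have : t ≤ -1 := by omega
      nlinarith
    · have : 1 ≤ t := by omega
      nlinarith
  have hz : 7 * d - i * dy = 0 → dy % 7 = 0 := by
    intro hz
    rcases hi with rfl | rfl | rfl <;> push_cast at hz <;> omega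
  have hm0 : (m : ℤ) ≠ 0 := by omega
  unfold Egen
  split_ifs with h0 h2
  · rw [h0] at hdx
    rw [beq_iff_eq]
    exact hz ((mul_eq_zero.mp hdx.symm).resolve_left hm0)
  · exfalso
    apply h0
    rcases h2 with ⟨ha, hb⟩ | ⟨h7, ha, hb⟩
    · rw [hdx] at ha hb
      rw [hdx, small m 5 _ (by norm_num) (by omega) ha hb, mul_zero]
    · obtain ⟨e, rfl⟩ := Int.dvd_of_emod_eq_zero h7
      have hdx' : dx = (7 * m : ℤ) * (d - i * e) := by linear_combination hdx
      rw [hdx'] at ha hb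
      rw [hdx', small (7 * m) 41 _ (by norm_num) (by omega) ha hb, mul_zero]
  · rfl

/-- Two cops, neither placed on `v` or `v'`, cannot cover all four branches of two
distinct neighbours `v, v'` of the robber `r`. -/
theorem two_cops_cannot_cover_four_branches_GP (n k : ℕ)
    (hn : 0 < n) (hk : 0 < k)
    (hi : ∃ i, i ∈ ({1, 2, 3} : Set ℕ) ∧ i * n = 7 * k)
    (h2k : 2 * k < n)
    (hbig : 42 ≤ n ∨ (n = 28 ∧ k = 8) ∨ (n = 35 ∧ k = 10) ∨ (n = 35 ∧ k = 15))
    (r v v' : GPVertex n) (hv : (GP n k).Adj r v) (hv' : (GP n k).Adj r v')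
    (hne : v ≠ v') :
    ¬ ∃ c₁ c₂ : GPVertex n,
        c₁ ∉ ({v, v'} : Set (GPVertex n)) ∧ c₂ ∉ ({v, v'} : Set (GPVertex n)) ∧
        (∀ u : GPVertex n, (GP n k).Adj v u → u ≠ r →
          (c₁ ∈ branch (GP n k) r v u ∨ c₂ ∈ branch (GP n k) r v u)) ∧
        (∀ u : GPVertex n, (GP n k).Adj v' u → u ≠ r →
          (c₁ ∈ branch (GP n k) r v' u ∨ c₂ ∈ branch (GP n k) r v' u)) := by
  rintro ⟨c₁, c₂, hc1, hc2, hb, hb'⟩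
  obtain ⟨i, hi, hik⟩ := hi
  simp only [Set.mem_insert_iff, Set.mem_singleton_iff] at hi
  have h1 : (1 : ZMod n) ≠ 0 := by
    intro h
    have : ((1 : ℕ) : ZMod n) = 0 := by simpa using h
    rw [ZMod.natCast_eq_zero_iff] at this
    have := Nat.le_of_dvd one_pos this
    omega
  have hk0 : (k : ZMod n) ≠ 0 := by
    intro h
    rw [ZMod.natCast_eq_zero_iff] at h
    have := Nat.le_of_dvd hk h
    omega
  have h7 : (7 : ZMod n) * k = 0 := by
    have : ((7 * k : ℕ) : ZMod n) = 0 := by rw [← hik]; simp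
    simpa using this
  rcases hbig with hbig | ⟨rfl, rfl⟩ | ⟨rfl, rfl⟩ | ⟨rfl, rfl⟩
  · exact core h1 hk0 h7 (Egen_ok hbig hi hik) mcheck_gen r v v' hv hv' hne c₁ c₂ hc1 hc2 hb hb'
  · exact core h1 hk0 h7 Espec_ok mcheck_28 r v v' hv hv' hne c₁ c₂ hc1 hc2 hb hb'
  · exact core h1 hk0 h7 Espec_ok mcheck_35 r v v' hv hv' hne c₁ c₂ hc1 hc2 hb hb'
  · exact core h1 hk0 h7 Espec_ok mcheck_35' r v v' hv hv' hne c₁ c₂ hc1 hc2 hb hb'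
end

section
/- Let n and k be positive integers with i·n = 7k for some i ∈ {1,2,3} and 2k < n, and suppose that either n ≥ 42 or (n,k) ∈ {(28,8),(35,10),(35,15)}. Let r be a vertex of GP(n,k), let v be a neighbour of r, and let u_1, u_2 be the two distinct neighbours of v other than r. Then the branch of v through u_1 and the branch of v through u_2 intersect exactly in {v}; in particular, no vertex other than v lies on both branches of v. -/
open SimpleGraph

/-- A step in the lattice cover of the generalised Petersen graph. -/
def gpMv (e : Fin 3) (s : Bool × ℤ × ℤ) : Bool × ℤ × ℤ :=
  match e, s with
  | 0, (b, x, y) => (!b, x, y)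
  | 1, (true, x, y) => (true, x + 1, y)
  | 1, (false, x, y) => (false, x, y + 1)
  | 2, (true, x, y) => (true, x - 1, y)
  | 2, (false, x, y) => (false, x, y - 1)

/-- The covering map. -/
def gpPos (n k : ℕ) (c : ZMod n) (s : Bool × ℤ × ℤ) : GPVertex n :=
  if s.1 then Sum.inl (c + (s.2.1 : ZMod n) + (s.2.2 : ZMod n) * (k : ZMod n))
  else Sum.inr (c + (s.2.1 : ZMod n) + (s.2.2 : ZMod n) * (k : ZMod n))

/-- The end of a closed lifted walk is a short non-zero translate. -/
def gpGood (b : Bool) (s : Bool × ℤ × ℤ) : Prop :=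
  s.1 = b → ((-3 ≤ s.2.1 ∧ s.2.1 ≤ 3) ∨ (s.2.2 = 0 ∧ -6 ≤ s.2.1 ∧ s.2.1 ≤ 6)) ∧
    (-6 ≤ s.2.2 ∧ s.2.2 ≤ 6) ∧ ¬ (s.2.1 = 0 ∧ s.2.2 = 0)

instance (b : Bool) (s : Bool × ℤ × ℤ) : Decidable (gpGood b s) := by
  unfold gpGood; infer_instance

theorem gp_adj_pos (n k : ℕ) (c : ZMod n) (s : Bool × ℤ × ℤ) (y : GPVertex n)
    (h : (GP n k).Adj (gpPos n k c s) y) : ∃ e, y = gpPos n k c (gpMv e s) := by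
  obtain ⟨b, x, z⟩ := s
  cases b <;> rcases y with y | y <;>
    simp only [gpPos, GP, SimpleGraph.fromRel_adj, GPRel, if_true, if_false, or_false, false_or,
      Bool.false_eq_true] at h <;> obtain ⟨-, h⟩ := h
  · exact ⟨0, by simp [gpMv, gpPos, h]⟩
  · rcases h with h | h
    · exact ⟨1, by simp [gpMv, gpPos, h]; ring⟩
    · exact ⟨2, by simp only [gpMv, gpPos, Bool.false_eq_true, if_false]; congr 1; push_cast; linear_combination -h⟩
  · rcases h with h | h
    · exact ⟨1, by simp [gpMv, gpPos, h]; ring⟩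
    · exact ⟨2, by simp only [gpMv, gpPos, if_true]; congr 1; push_cast; linear_combination -h⟩
  · exact ⟨0, by simp [gpMv, gpPos, h]⟩

theorem gp_step_congr (n k : ℕ) (c : ZMod n) (e : Fin 3) (s t : Bool × ℤ × ℤ)
    (h : gpPos n k c s = gpPos n k c t) :
    gpPos n k c (gpMv e s) = gpPos n k c (gpMv e t) := by
  obtain ⟨b, x, z⟩ := s
  obtain ⟨b', x', z'⟩ := t
  cases b <;> cases b' <;> simp [gpPos] at h <;> fin_cases e <;> simp [gpPos, gpMv] <;>
    linear_combination h

theorem gp_dec4 : ∀ (b : Bool) (e1 e2 e3 e4 : Fin 3),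
    let s0 : Bool × ℤ × ℤ := (b, 0, 0)
    let s1 := gpMv e1 s0
    let s2 := gpMv e2 s1
    s2 ≠ s0 →
    let s3 := gpMv e3 s2
    s3 ≠ s1 →
    let s4 := gpMv e4 s3
    s4 ≠ s2 → gpMv e1 s4 ≠ s3 → gpGood b s4 := by
  decide +kernel

theorem gp_dec6 : ∀ (b : Bool) (e1 e2 e3 e4 e5 e6 : Fin 3),
    let s0 : Bool × ℤ × ℤ := (b, 0, 0)
    let s1 := gpMv e1 s0
    let s2 := gpMv e2 s1
    s2 ≠ s0 →
    let s3 := gpMv e3 s2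
    s3 ≠ s1 →
    let s4 := gpMv e4 s3
    s4 ≠ s2 →
    let s5 := gpMv e5 s4
    s5 ≠ s3 →
    let s6 := gpMv e6 s5
    s6 ≠ s4 → gpMv e1 s6 ≠ s5 → gpGood b s6 := by
  decide +kernel

theorem gp_not_good (n k : ℕ) (hn : 28 ≤ n)
    (hi : ∃ i, i ∈ ({1, 2, 3} : Set ℕ) ∧ i * n = 7 * k) (c : ZMod n) (b : Bool)
    (s : Bool × ℤ × ℤ) (hs : gpPos n k c s = gpPos n k c (b, 0, 0)) (hg : gpGood b s) : False := by
  obtain ⟨b', x, y⟩ := s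
  have hb : b' = b := by cases b <;> cases b' <;> simp [gpPos] at hs ⊢
  subst hb
  have h0 : ((x + y * k : ℤ) : ZMod n) = 0 := by
    cases b' <;> simp [gpPos] at hs <;> push_cast <;> linear_combination hs
  rw [ZMod.intCast_zmod_eq_zero_iff_dvd] at h0
  obtain ⟨q, hq⟩ := h0
  obtain ⟨hx, hy, hxy⟩ := hg rfl
  simp only at hx hy hxy
  obtain ⟨i, hi, hik⟩ := hi
  have h7 : ∃ s, n = 7 * s := by
    simp at hi
    exact ⟨n / 7, by rcases hi with rfl | rfl | rfl <;> omega⟩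
  obtain ⟨s, rfl⟩ := h7
  have hk : k = i * s := by nlinarith
  subst hk
  have hs4 : (4 : ℤ) ≤ s := by omega
  have hxs : x = s * (7 * q - y * i) := by push_cast at hq; linear_combination hq
  rcases hx with hx | ⟨rfl, hx⟩
  · have : 7 * q - y * i = 0 := by
      rcases lt_trichotomy (7 * q - y * i) 0 with h | h | h
      · nlinarith
      · exact h
      · nlinarith
    have hx0 : x = 0 := by rw [hxs, this, mul_zero]
    apply hxy
    refine ⟨hx0, ?_⟩
    simp at hi
    rcases hi with rfl | rfl | rfl <;> push_cast at this <;> omega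
  · have hq0 : q = 0 := by
      rcases lt_trichotomy q 0 with h | h | h
      · nlinarith
      · exact h
      · nlinarith
    subst hq0
    simp at hxs
    exact hxy ⟨hxs, rfl⟩

theorem gp_lift (n k : ℕ) (v : GPVertex n) : ∃ c b, v = gpPos n k c (b, 0, 0) := by
  rcases v with c | c
  · exact ⟨c, true, by simp [gpPos]⟩
  · exact ⟨c, false, by simp [gpPos]⟩

theorem gp_no4 (n k : ℕ) (hn : 28 ≤ n)
    (hi : ∃ i, i ∈ ({1, 2, 3} : Set ℕ) ∧ i * n = 7 * k) (v a w b : GPVertex n)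
    (h1 : (GP n k).Adj v a) (h2 : (GP n k).Adj a w) (h3 : (GP n k).Adj w b)
    (h4 : (GP n k).Adj b v) (hvw : w ≠ v) (hab : b ≠ a) : False := by
  obtain ⟨c, t, rfl⟩ := gp_lift n k v
  obtain ⟨e1, rfl⟩ := gp_adj_pos n k c _ _ h1
  obtain ⟨e2, rfl⟩ := gp_adj_pos n k c _ _ h2
  obtain ⟨e3, rfl⟩ := gp_adj_pos n k c _ _ h3
  obtain ⟨e4, h⟩ := gp_adj_pos n k c _ _ h4
  refine gp_not_good n k hn hi c t _ h.symm (gp_dec4 t e1 e2 e3 e4 ?_ ?_ ?_ ?_)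
  · exact fun h' => hvw (congrArg _ h')
  · exact fun h' => hab (congrArg _ h')
  · exact fun h' => hvw (by rw [h, h'])
  · exact fun h' => hab (by rw [← h']; exact gp_step_congr n k c e1 _ _ h.symm)

theorem gp_no6 (n k : ℕ) (hn : 28 ≤ n)
    (hi : ∃ i, i ∈ ({1, 2, 3} : Set ℕ) ∧ i * n = 7 * k) (v a x w y b : GPVertex n)
    (h1 : (GP n k).Adj v a) (h2 : (GP n k).Adj a x) (h3 : (GP n k).Adj x w)
    (h4 : (GP n k).Adj w y) (h5 : (GP n k).Adj y b) (h6 : (GP n k).Adj b v)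
    (n1 : x ≠ v) (n2 : w ≠ a) (n3 : y ≠ x) (n4 : b ≠ w) (n5 : v ≠ y) (n6 : a ≠ b) : False := by
  obtain ⟨c, t, rfl⟩ := gp_lift n k v
  obtain ⟨e1, rfl⟩ := gp_adj_pos n k c _ _ h1
  obtain ⟨e2, rfl⟩ := gp_adj_pos n k c _ _ h2
  obtain ⟨e3, rfl⟩ := gp_adj_pos n k c _ _ h3
  obtain ⟨e4, rfl⟩ := gp_adj_pos n k c _ _ h4
  obtain ⟨e5, rfl⟩ := gp_adj_pos n k c _ _ h5
  obtain ⟨e6, h⟩ := gp_adj_pos n k c _ _ h6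
  refine gp_not_good n k hn hi c t _ h.symm (gp_dec6 t e1 e2 e3 e4 e5 e6 ?_ ?_ ?_ ?_ ?_ ?_)
  · exact fun h' => n1 (congrArg _ h')
  · exact fun h' => n2 (congrArg _ h')
  · exact fun h' => n3 (congrArg _ h')
  · exact fun h' => n4 (congrArg _ h')
  · exact fun h' => n5 (by rw [h, h'])
  · exact fun h' => n6 (by rw [← h']; exact (gp_step_congr n k c e1 _ _ h.symm).symm)

/-- The possible shapes of a short path starting with `r, v, u`. -/
theorem walk_shape {V : Type*} (G : SimpleGraph V) (r v u w : V) (p : G.Walk r w)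
    (hp : p.support.Nodup) (hl : p.length ≤ 4) (hpre : [r, v, u] <+: p.support) :
    (p.length = 2 ∧ w = u) ∨ (p.length = 3 ∧ G.Adj u w ∧ w ≠ v) ∨
    (p.length = 4 ∧ ∃ x, G.Adj u x ∧ G.Adj x w ∧ x ≠ v ∧ w ≠ u) := by
  rcases p with _ | ⟨h1, _ | ⟨h2, _ | ⟨h3, _ | ⟨h4, _ | ⟨h5, p⟩⟩⟩⟩⟩
  · simp at hpre
  · simp at hpre
  · simp at hpre
    exact Or.inl ⟨rfl, hpre.2.symm⟩
  · simp at hpre hp ⊢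
    grind
  · simp at hpre hp ⊢
    grind
  · simp at hl
    omega

theorem branches_intersect_in_singleton_GP (n k : ℕ)
    (hn : 0 < n) (hk : 0 < k)
    (hi : ∃ i, i ∈ ({1, 2, 3} : Set ℕ) ∧ i * n = 7 * k)
    (h2k : 2 * k < n)
    (hbig : 42 ≤ n ∨ (n = 28 ∧ k = 8) ∨ (n = 35 ∧ k = 10) ∨ (n = 35 ∧ k = 15))
    (r v u₁ u₂ : GPVertex n) (hv : (GP n k).Adj r v)
    (hu₁ : (GP n k).Adj v u₁) (hu₂ : (GP n k).Adj v u₂)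
    (hu₁r : u₁ ≠ r) (hu₂r : u₂ ≠ r) (hne : u₁ ≠ u₂) :
    branch (GP n k) r v u₁ ∩ branch (GP n k) r v u₂ = {v} := by
  have hn28 : 28 ≤ n := by omega
  ext w
  constructor
  swap
  · rintro rfl
    exact ⟨Set.mem_insert _ _, Set.mem_insert _ _⟩
  rintro ⟨h1, h2⟩
  rcases h1 with h1 | ⟨hd, p, hp, hpp⟩
  · exact h1
  rcases h2 with h2 | ⟨-, q, hq, hqp⟩
  · exact h2
  exfalso
  have hP := walk_shape _ r v u₁ w p (p.isPath_of_length_eq_dist hp).support_nodup (by omega) hpp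
  have hQ := walk_shape _ r v u₂ w q (q.isPath_of_length_eq_dist hq).support_nodup (by omega) hqp
  rcases hP with ⟨l, hP⟩ | ⟨l, hP, hwv⟩ | ⟨l, x, a1, a2, a3, a4⟩ <;>
    rcases hQ with ⟨l', hQ⟩ | ⟨l', hQ, hwv'⟩ | ⟨l', y, b1, b2, b3, b4⟩ <;> try omega
  · exact hne (hP.symm.trans hQ)
  · exact gp_no4 n k hn28 hi v u₁ w u₂ hu₁ hP hQ.symm hu₂.symm hwv hne.symm
  · by_cases hxy : y = x
    · subst hxy
      exact gp_no4 n k hn28 hi v u₁ y u₂ hu₁ a1 b1.symm hu₂.symm a3 hne.symm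
    · exact gp_no6 n k hn28 hi v u₁ x w y u₂ hu₁ a1 a2 b2.symm b1.symm hu₂.symm a3 a4 hxy
        b4.symm b3.symm hne
end

section
/- Let n and k be positive integers with i·n = 7k for some i ∈ {1,2,3} and 2k < n, and suppose that either n ≥ 42 or (n,k) ∈ {(28,8),(35,10),(35,15)}. Then for any vertices c_1, c_2, c_3 of GP(n,k) (the positions of three cops), there exists a vertex r with r ∉ {c_1, c_2, c_3} such that the configuration (c_1,c_2,c_3; r) is not trapped. -/
open SimpleGraph

/-- The closed neighbourhood of a vertex of `GP n k`, as an explicit finset. -/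
def cnF (n k : ℕ) : GPVertex n → Finset (GPVertex n)
  | Sum.inl i => {Sum.inl i, Sum.inl (i + 1), Sum.inl (i - 1), Sum.inr i}
  | Sum.inr i => {Sum.inr i, Sum.inr (i + k), Sum.inr (i - k), Sum.inl i}

lemma cnF_card (n k : ℕ) (v : GPVertex n) : (cnF n k v).card ≤ 4 := by
  cases v <;> exact Finset.card_le_four

lemma self_mem_cnF (n k : ℕ) (v : GPVertex n) : v ∈ cnF n k v := by
  cases v <;> simp [cnF]

lemma adj_mem_cnF (n k : ℕ) (v w : GPVertex n) (h : (GP n k).Adj v w) : w ∈ cnF n k v := by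
  rw [GP, SimpleGraph.fromRel_adj] at h
  obtain ⟨-, h⟩ := h
  rcases v with i | i <;> rcases w with j | j <;> simp only [GPRel, or_false, false_or] at h <;>
    simp only [cnF, Finset.mem_insert, Finset.mem_singleton, Sum.inl.injEq, Sum.inr.injEq,
      reduceCtorEq, or_false, false_or]
  · rcases h with h | h
    · simp [h]
    · right; right; rw [h]; ring
  · exact h
  · exact h.symm
  · rcases h with h | h
    · simp [h]
    · right; right; rw [h]; ring

lemma exists_adj_GP (n k : ℕ) (r : GPVertex n) : ∃ v, (GP n k).Adj r v := by
  rcases r with i | i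
  · exact ⟨Sum.inr i, by simp [GP, SimpleGraph.fromRel_adj, GPRel]⟩
  · exact ⟨Sum.inl i, by simp [GP, SimpleGraph.fromRel_adj, GPRel]⟩

/-- All vertices at distance at most two from `c`. -/
def ballF (n k : ℕ) (c : GPVertex n) : Finset (GPVertex n) :=
  (cnF n k c).biUnion (cnF n k)

lemma ballF_card (n k : ℕ) (c : GPVertex n) : (ballF n k c).card ≤ 16 := by
  have h := Finset.card_biUnion_le_card_mul (cnF n k c) (cnF n k) 4 (fun v _ => cnF_card n k v)
  have := cnF_card n k c
  unfold ballF
  omega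

lemma mem_ballF (n k : ℕ) (c v r : GPVertex n) (hv : v ∈ cnF n k c) (hr : r ∈ cnF n k v) :
    r ∈ ballF n k c := Finset.mem_biUnion.2 ⟨v, hv, hr⟩

lemma mem_ballF_of_adj_closed (n k : ℕ) (c v r : GPVertex n) (hrv : (GP n k).Adj r v)
    (hc : c ∈ closedNbhd (GP n k) v) : r ∈ ballF n k c := by
  refine mem_ballF n k c v r ?_ (adj_mem_cnF n k v r hrv.symm)
  rcases hc with rfl | hc
  · exact self_mem_cnF n k c
  · exact adj_mem_cnF n k c v (SimpleGraph.Adj.symm hc)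

/-- Wherever three cops are placed on `GP(n,k)`, the robber has a starting vertex,
not occupied by a cop, at which they are not trapped. -/
theorem exists_untrapped_start_GP (n k : ℕ)
    (hn : 0 < n) (hk : 0 < k)
    (hi : ∃ i, i ∈ ({1, 2, 3} : Set ℕ) ∧ i * n = 7 * k)
    (h2k : 2 * k < n)
    (hbig : 42 ≤ n ∨ (n = 28 ∧ k = 8) ∨ (n = 35 ∧ k = 10) ∨ (n = 35 ∧ k = 15)) :
    ∀ c₁ c₂ c₃ : GPVertex n, ∃ r : GPVertex n,
      r ∉ ({c₁, c₂, c₃} : Set (GPVertex n)) ∧ ¬ Trapped (GP n k) c₁ c₂ c₃ r := by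
  have hn28 : 28 ≤ n := by omega
  haveI : NeZero n := ⟨by omega⟩
  intro c₁ c₂ c₃
  obtain ⟨r, hr⟩ : ∃ r, r ∉ ballF n k c₁ ∪ ballF n k c₂ ∪ ballF n k c₃ := by
    by_contra! hall
    have hle : Fintype.card (GPVertex n) ≤ 48 := by
      rw [← Finset.card_univ, ← Finset.eq_univ_iff_forall.2 hall]
      have h1 := Finset.card_union_le (ballF n k c₁ ∪ ballF n k c₂) (ballF n k c₃)
      have h2 := Finset.card_union_le (ballF n k c₁) (ballF n k c₂)
      have := ballF_card n k c₁
      have := ballF_card n k c₂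
      have := ballF_card n k c₃
      omega
    rw [Fintype.card_sum, ZMod.card] at hle
    omega
  simp only [Finset.mem_union, not_or] at hr
  obtain ⟨⟨h1, h2⟩, h3⟩ := hr
  have hself (c : GPVertex n) : c ∈ ballF n k c :=
    mem_ballF n k c c c (self_mem_cnF n k c) (self_mem_cnF n k c)
  have hadj (c : GPVertex n) (h : (GP n k).Adj c r) : r ∈ ballF n k c :=
    mem_ballF n k c c r (self_mem_cnF n k c) (adj_mem_cnF n k c r h)
  refine ⟨r, ?_, ?_⟩
  · rintro (rfl | rfl | rfl)
    · exact h1 (hself _)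
    · exact h2 (hself _)
    · exact h3 (hself _)
  · rintro ((h | h | h) | h)
    · exact h1 (hadj _ h)
    · exact h2 (hadj _ h)
    · exact h3 (hadj _ h)
    · obtain ⟨v, hv⟩ := exists_adj_GP n k r
      rcases h v hv with h | h | h
      · exact h1 (mem_ballF_of_adj_closed n k _ v r hv h)
      · exact h2 (mem_ballF_of_adj_closed n k _ v r hv h)
      · exact h3 (mem_ballF_of_adj_closed n k _ v r hv h)
end

section
/- Let n and k be positive integers with i·n = 7k for some i ∈ {1,2,3} and 2k < n, and suppose that either n ≥ 42 or (n,k) ∈ {(28,8),(35,10),(35,15)}. Then for every vertex v of GP(n,k), there are exactly 3 vertices at graph distance 1 from v, exactly 6 vertices at graph distance 2 from v, and exactly 12 vertices at graph distance 3 from v; in particular the ball of radius 3 around v contains exactly 22 vertices. -/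
open SimpleGraph

namespace GPAux

/-- Combinatorial cover: side, coefficient of 1, coefficient of k. -/
abbrev T := Bool × ℤ × ℤ

def nb : T → Finset T
  | (true, p, q) => {(true, p + 1, q), (true, p - 1, q), (false, p, q)}
  | (false, p, q) => {(false, p, q + 1), (false, p, q - 1), (true, p, q)}

def B (t : T) : ℕ → Finset T
  | 0 => {t}
  | r + 1 => B t r ∪ (B t r).biUnion nb

def f (n k : ℕ) (x : ZMod n) : T → GPVertex n
  | (true, p, q) => Sum.inl (x + (p : ZMod n) + (q : ZMod n) * (k : ZMod n))
  | (false, p, q) => Sum.inr (x + (p : ZMod n) + (q : ZMod n) * (k : ZMod n))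

def good (s t : T) : Prop :=
  s = t ∨ s.1 ≠ t.1 ∨ (s.2.2 = t.2.2 ∧ |s.2.1 - t.2.1| ≤ 27 ∧ s.2.1 ≠ t.2.1) ∨
    (¬ (7 : ℤ) ∣ s.2.2 - t.2.2) ∧ |s.2.1 - t.2.1| < 4

instance (s t : T) : Decidable (good s t) := by unfold good; infer_instance

lemma good_all : ∀ b : Bool, ∀ s ∈ B (b, 0, 0) 3, ∀ t ∈ B (b, 0, 0) 3, good s t := by
  decide +kernel

lemma card_B : ∀ b : Bool, (B (b, 0, 0) 0).card = 1 ∧ (B (b, 0, 0) 1).card = 4 ∧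
    (B (b, 0, 0) 2).card = 10 ∧ (B (b, 0, 0) 3).card = 22 := by
  decide +kernel

lemma arith (m i : ℕ) (hm : 4 ≤ m) (hi : i = 1 ∨ i = 2 ∨ i = 3) (dp dq : ℤ)
    (h : ((7 * m : ℕ) : ℤ) ∣ dp + dq * ((i * m : ℕ) : ℤ))
    (hg : (dq = 0 ∧ |dp| ≤ 27 ∧ dp ≠ 0) ∨ (¬ (7 : ℤ) ∣ dq) ∧ |dp| < 4) : False := by
  obtain ⟨c, hc⟩ := h
  push_cast at hc
  rcases hg with ⟨h0, h1, h2⟩ | ⟨h0, h1⟩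
  · subst h0
    have : (7 * m : ℤ) ∣ dp := ⟨c, by linarith⟩
    have h3 := Int.eq_zero_of_abs_lt_dvd this (by omega)
    exact h2 h3
  · have : (m : ℤ) ∣ dp := ⟨7 * c - dq * i, by linarith⟩
    have h3 := Int.eq_zero_of_abs_lt_dvd this (by omega)
    subst h3
    have h4 : (m : ℤ) * (dq * i) = m * (7 * c) := by linarith
    have h5 := mul_left_cancel₀ (by omega) h4
    rcases hi with rfl | rfl | rfl <;> push_cast at h5 <;> omega

lemma cast_ne (m i : ℕ) (hm : 4 ≤ m) (hi : i = 1 ∨ i = 2 ∨ i = 3) (x : ZMod (7 * m)) (p q p' q' : ℤ)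
    (h : x + (p : ZMod (7 * m)) + q * ((i * m : ℕ) : ZMod (7 * m)) =
      x + (p' : ZMod (7 * m)) + q' * ((i * m : ℕ) : ZMod (7 * m)))
    (hg : (q = q' ∧ |p - p'| ≤ 27 ∧ p ≠ p') ∨ (¬ (7 : ℤ) ∣ q - q') ∧ |p - p'| < 4) : False := by
  refine arith m i hm hi (p - p') (q - q') ?_ ?_
  · rw [← ZMod.intCast_zmod_eq_zero_iff_dvd]
    push_cast at h ⊢
    linear_combination h
  · rcases hg with ⟨h0, h1, h2⟩ | h
    · exact Or.inl ⟨by omega, h1, by omega⟩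
    · exact Or.inr h

lemma f_inj (m i : ℕ) (hm : 4 ≤ m) (hi : i = 1 ∨ i = 2 ∨ i = 3) (x : ZMod (7 * m)) (s t : T)
    (hg : good s t) (h : f (7 * m) (i * m) x s = f (7 * m) (i * m) x t) : s = t := by
  rcases hg with hg | hg | hg
  · exact hg
  · obtain ⟨_ | _, p, q⟩ := s <;> obtain ⟨_ | _, p', q'⟩ := t <;> simp [f] at h hg
  · exfalso
    obtain ⟨_ | _, p, q⟩ := s <;> obtain ⟨_ | _, p', q'⟩ := t <;>
      simp only [f, Sum.inl.injEq, Sum.inr.injEq, reduceCtorEq] at h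
    · exact cast_ne m i hm hi x p q p' q' h hg
    · exact cast_ne m i hm hi x p q p' q' h hg

lemma adj_f (m i : ℕ) (hm : 4 ≤ m) (hi : i = 1 ∨ i = 2 ∨ i = 3) (x : ZMod (7 * m)) (t : T)
    (w : GPVertex (7 * m)) :
    (GP (7 * m) (i * m)).Adj (f (7 * m) (i * m) x t) w ↔
      ∃ s ∈ nb t, f (7 * m) (i * m) x s = w := by
  have key : ∀ s ∈ nb t, f (7 * m) (i * m) x t ≠ f (7 * m) (i * m) x s := by
    intro s hs h
    have hg : good t s ∧ t ≠ s := by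
      obtain ⟨_ | _, p, q⟩ := t <;> simp only [nb, Finset.mem_insert, Finset.mem_singleton] at hs <;>
      rcases hs with rfl | rfl | rfl <;> simp [good] <;> omega
    exact hg.2 (f_inj m i hm hi x t s hg.1 h)
  have h2 : (GPRel (7 * m) (i * m) (f (7 * m) (i * m) x t) w ∨
      GPRel (7 * m) (i * m) w (f (7 * m) (i * m) x t)) ↔ ∃ s ∈ nb t, f (7 * m) (i * m) x s = w := by
    generalize i * m = k
    obtain ⟨_ | _, p, q⟩ := t <;> obtain w | w := w <;>
      simp only [nb, f, GPRel, Finset.mem_insert, Finset.mem_singleton, exists_eq_or_imp,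
        exists_eq_left, Sum.inl.injEq, Sum.inr.injEq, reduceCtorEq, false_or, or_false] <;>
      push_cast
    · constructor
      · rintro (h | h)
        · left; linear_combination -h
        · right; linear_combination h
      · rintro (h | h)
        · left; linear_combination -h
        · right; linear_combination h
    · constructor
      · rintro (h | h)
        · left; linear_combination -h
        · right; linear_combination h
      · rintro (h | h)
        · left; linear_combination -h
        · right; linear_combination h
    · exact eq_comm
  rw [GP, SimpleGraph.fromRel_adj, h2]
  constructor
  · exact fun h => h.2
  · rintro ⟨s, hs, rfl⟩
    exact ⟨key s hs, s, hs, rfl⟩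

lemma conn (n k : ℕ) (hn : 2 ≤ n) : (GP n k).Connected := by
  have : NeZero n := ⟨by omega⟩
  have : Fact (1 < n) := ⟨by omega⟩
  have h1 : ∀ j : ℕ, (GP n k).Reachable (Sum.inl 0) (Sum.inl (j : ZMod n)) := by
    intro j
    induction j with
    | zero => simp
    | succ j ih =>
      refine ih.trans (SimpleGraph.Adj.reachable ?_)
      rw [GP, SimpleGraph.fromRel_adj]
      simp [GPRel]
  have h2 : ∀ v, (GP n k).Reachable (Sum.inl 0) v := by
    have h3 : ∀ j : ZMod n, (GP n k).Reachable (Sum.inl 0) (Sum.inl j) := by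
      intro j
      have := h1 j.val
      rwa [ZMod.natCast_zmod_val] at this
    rintro (j | j)
    · exact h3 j
    · refine (h3 j).trans (SimpleGraph.Adj.reachable ?_)
      rw [GP, SimpleGraph.fromRel_adj]
      simp [GPRel]
  exact (SimpleGraph.connected_iff_exists_forall_reachable _).2 ⟨_, h2⟩

lemma dist_succ {V : Type*} (G : SimpleGraph V) (hG : G.Connected) (v w : V) (r : ℕ) :
    G.dist v w ≤ r + 1 ↔ G.dist v w ≤ r ∨ ∃ u, G.dist v u ≤ r ∧ G.Adj u w := by
  constructor
  · intro h
    by_cases h0 : G.dist v w ≤ r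
    · exact Or.inl h0
    right
    obtain ⟨p, hp⟩ := hG.exists_walk_length_eq_dist w v
    cases p with
    | nil => simp at h0
    | cons ha q =>
      rename_i u
      refine ⟨u, ?_, ha.symm⟩
      have := SimpleGraph.dist_le q
      rw [SimpleGraph.dist_comm] at this
      rw [SimpleGraph.Walk.length_cons, SimpleGraph.dist_comm] at hp
      omega
  · rintro (h | ⟨u, h, ha⟩)
    · omega
    · have h1 := hG.dist_triangle (u := v) (v := u) (w := w)
      have h2 := SimpleGraph.dist_eq_one_iff_adj.2 ha
      omega

lemma ball (m i : ℕ) (hm : 4 ≤ m) (hi : i = 1 ∨ i = 2 ∨ i = 3) (x : ZMod (7 * m)) (t : T) (r : ℕ) :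
    {w | (GP (7 * m) (i * m)).dist (f (7 * m) (i * m) x t) w ≤ r} =
      f (7 * m) (i * m) x '' (B t r : Set T) := by
  have hc := conn (7 * m) (i * m) (by omega)
  induction r with
  | zero =>
    ext w
    simp [B, hc.dist_eq_zero_iff, eq_comm]
  | succ r ih =>
    ext w
    have ih' : ∀ w, (GP (7 * m) (i * m)).dist (f (7 * m) (i * m) x t) w ≤ r ↔
      ∃ s ∈ B t r, f (7 * m) (i * m) x s = w := fun w => by
        simpa using Set.ext_iff.1 ih w
    simp only [Set.mem_ofPred_eq, dist_succ _ hc, ih', Set.mem_image, Finset.mem_coe, B,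
      Finset.mem_union, Finset.mem_biUnion]
    constructor
    · rintro (⟨s, hs, h⟩ | ⟨u, ⟨s, hs, rfl⟩, ha⟩)
      · exact ⟨s, Or.inl hs, h⟩
      · obtain ⟨s', hs', rfl⟩ := (adj_f m i hm hi x s w).1 ha
        exact ⟨s', Or.inr ⟨s, hs, hs'⟩, rfl⟩
    · rintro ⟨s', hs | ⟨s, hs, hs'⟩, rfl⟩
      · exact Or.inl ⟨s', hs, rfl⟩
      · exact Or.inr ⟨_, ⟨s, hs, rfl⟩, (adj_f m i hm hi x s _).2 ⟨s', hs', rfl⟩⟩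

lemma B_mono (t : T) : Monotone (B t) :=
  monotone_nat_of_le_succ fun _ => Finset.subset_union_left

lemma ball_card (m i : ℕ) (hm : 4 ≤ m) (hi : i = 1 ∨ i = 2 ∨ i = 3) (x : ZMod (7 * m)) (b : Bool)
    (r : ℕ) (hr : r ≤ 3) :
    {w | (GP (7 * m) (i * m)).dist (f (7 * m) (i * m) x (b, 0, 0)) w ≤ r}.ncard =
      (B (b, 0, 0) r).card := by
  rw [ball m i hm hi, Set.ncard_image_of_injOn, Set.ncard_coe_finset]
  intro s hs t ht h
  exact f_inj m i hm hi x s t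
    (good_all b s (B_mono _ hr hs) t (B_mono _ hr ht)) h

lemma sphere_card {V : Type*} [Finite V] (g : V → ℕ) (r : ℕ) :
    {w | g w = r + 1}.ncard + {w | g w ≤ r}.ncard = {w | g w ≤ r + 1}.ncard := by
  rw [← Set.ncard_union_eq]
  · congr 1
    ext w
    simp only [Set.mem_union, Set.mem_ofPred_eq]
    omega
  · rw [Set.disjoint_left]
    intro w h1 h2
    simp only [Set.mem_ofPred_eq] at h1 h2
    omega

lemma main (m i : ℕ) (hm : 4 ≤ m) (hi : i = 1 ∨ i = 2 ∨ i = 3) (v : GPVertex (7 * m)) :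
      {w | (GP (7 * m) (i * m)).dist v w = 1}.ncard = 3 ∧
      {w | (GP (7 * m) (i * m)).dist v w = 2}.ncard = 6 ∧
      {w | (GP (7 * m) (i * m)).dist v w = 3}.ncard = 12 ∧
      {w | (GP (7 * m) (i * m)).dist v w ≤ 3}.ncard = 22 := by
  have : NeZero (7 * m) := ⟨by omega⟩
  obtain ⟨x, b, rfl⟩ : ∃ x b, v = f (7 * m) (i * m) x (b, 0, 0) := by
    obtain x | x := v
    · exact ⟨x, true, by simp [f]⟩
    · exact ⟨x, false, by simp [f]⟩
  have hb := ball_card m i hm hi x b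
  obtain ⟨c0, c1, c2, c3⟩ := card_B b
  have b0 := hb 0 (by omega)
  have b1 := hb 1 (by omega)
  have b2 := hb 2 (by omega)
  have b3 := hb 3 (by omega)
  have s := sphere_card ((GP (7 * m) (i * m)).dist (f (7 * m) (i * m) x (b, 0, 0)))
  have s0 := s 0
  have s1 := s 1
  have s2 := s 2
  simp only [Nat.reduceAdd] at s0 s1 s2
  refine ⟨?_, ?_, ?_, ?_⟩ <;> omega

end GPAux

/-- In our families of graphs, every vertex has exactly `3` vertices at distance `1`,
`6` at distance `2`, and `12` at distance `3`; in particular the ball of radius `3`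
contains exactly `22` vertices. -/
theorem GP_ball_counts (n k : ℕ)
    (hn : 0 < n) (hk : 0 < k)
    (hi : ∃ i, i ∈ ({1, 2, 3} : Set ℕ) ∧ i * n = 7 * k)
    (h2k : 2 * k < n)
    (hbig : 42 ≤ n ∨ (n = 28 ∧ k = 8) ∨ (n = 35 ∧ k = 10) ∨ (n = 35 ∧ k = 15)) :
    ∀ v : GPVertex n,
      {w : GPVertex n | (GP n k).dist v w = 1}.ncard = 3 ∧
      {w : GPVertex n | (GP n k).dist v w = 2}.ncard = 6 ∧
      {w : GPVertex n | (GP n k).dist v w = 3}.ncard = 12 ∧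
      {w : GPVertex n | (GP n k).dist v w ≤ 3}.ncard = 22 := by
  obtain ⟨i, hi, h⟩ := hi
  have hi' : i = 1 ∨ i = 2 ∨ i = 3 := by simpa using hi
  obtain ⟨m, rfl⟩ : ∃ m, n = 7 * m := ⟨n / 7, by rcases hi' with rfl | rfl | rfl <;> omega⟩
  obtain rfl : k = i * m := by
    rcases hi' with rfl | rfl | rfl <;> omega
  exact GPAux.main m i (by omega) hi'
end
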